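/- arXiv:1706.00343 — 2 statements merged into one kernel-verified Lean document; each statement's English description precedes it below -/
import Mathlib

section
/- Let α be real and a, q positive integers with gcd(a,q) = 1 and |α − a/q| < 1/q². Then S₁(α) = Σ_{δX ≤ p ≤ X} (log p) e(pα) satisfies |S₁(α)| ≪ (X/√q + √(Xq) + X^{4/5}) (log X)⁴. -/
open Real MeasureTheory

/-- `e(x) = exp(2πix)` -/
noncomputable def e (x : ℝ) : ℂ := Complex.exp (2 * Real.pi * Complex.I * x)

/-- `S₁(α) = Σ_{δX ≤ p ≤ X} (log p) e(pα)`, sum over primes `p`. -/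
noncomputable def S1 (δ X : ℝ) (α : ℝ) : ℂ :=
  ∑ p ∈ (Finset.Icc 1 (Nat.floor X)).filter
      (fun p : ℕ => p.Prime ∧ δ * X ≤ (p : ℝ) ∧ (p : ℝ) ≤ X),
    (Real.log p : ℂ) * e ((p : ℝ) * α)


/-- distance to the nearest integer -/
noncomputable def nd (x : ℝ) : ℝ := |x - round x|

/-- smooth version of `min M (1/‖x‖)` -/
noncomputable def hh (M x : ℝ) : ℝ := 2 * M / (1 + M * nd x)

lemma nd_nonneg (x : ℝ) : 0 ≤ nd x := abs_nonneg _

lemma nd_le_half (x : ℝ) : nd x ≤ 1 / 2 := abs_sub_round x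

lemma nd_le (x : ℝ) (m : ℤ) : nd x ≤ |x - m| := round_le x m

lemma nd_neg (x : ℝ) : nd (-x) = nd x := by
  apply le_antisymm
  · have := nd_le (-x) (-(round x))
    refine this.trans_eq ?_
    rw [nd, ← abs_neg]; congr 1; push_cast; ring
  · have := nd_le x (-(round (-x)))
    refine this.trans_eq ?_
    rw [nd, ← abs_neg]; congr 1; push_cast; ring

lemma hh_neg (M x : ℝ) : hh M (-x) = hh M x := by rw [hh, hh, nd_neg]

lemma hh_nonneg {M : ℝ} (hM : 0 ≤ M) (x : ℝ) : 0 ≤ hh M x := by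
  have := nd_nonneg x
  unfold hh; positivity

lemma hh_mono {M M' : ℝ} (hM : 0 ≤ M) (h : M ≤ M') (x : ℝ) : hh M x ≤ hh M' x := by
  have := nd_nonneg x
  have h' : 0 ≤ M' := hM.trans h
  unfold hh
  rw [div_le_div_iff₀ (by positivity) (by positivity)]
  nlinarith

lemma norm_e (x : ℝ) : ‖e x‖ = 1 := by
  have : e x = Complex.exp ((2 * Real.pi * x : ℝ) * Complex.I) := by
    unfold e; congr 1; push_cast; ring
  rw [this, Complex.norm_exp_ofReal_mul_I]

lemma e_add (x y : ℝ) : e (x + y) = e x * e y := by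
  unfold e; rw [← Complex.exp_add]; congr 1; push_cast; ring

lemma e_int (n : ℤ) : e n = 1 := by
  unfold e
  rw [Complex.exp_eq_one_iff]
  exact ⟨n, by push_cast; ring⟩

lemma e_zero : e 0 = 1 := by simp [e]

lemma e_neg (x : ℝ) : e (-x) = (starRingEnd ℂ) (e x) := by
  unfold e; rw [← Complex.exp_conj]; congr 1; simp
  left; exact (map_ofNat _ 2).symm

lemma norm_e_sub_one (x : ℝ) : 4 * nd x ≤ ‖e x - 1‖ := by
  have h1 : e x = e (x - round x) := by
    have := e_add (x - round x) (round x)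
    rw [e_int, mul_one, sub_add_cancel] at this
    exact this
  set t := x - round x with ht
  have hnd : nd x = |t| := rfl
  have hle : |t| ≤ 1 / 2 := nd_le_half x
  have h2 : e x - 1 = Complex.exp (Complex.I * (2 * Real.pi * t : ℝ)) - 1 := by
    rw [h1]; unfold e; congr 2; push_cast; ring
  rw [h2, Complex.norm_exp_I_mul_ofReal_sub_one, hnd]
  have h3 : 2 * Real.pi * t / 2 = Real.pi * t := by ring
  rw [h3, norm_mul, Real.norm_eq_abs, Real.norm_eq_abs, abs_two]
  have h4 := Real.mul_abs_le_abs_sin (x := Real.pi * t) (by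
    rw [abs_mul, abs_of_pos Real.pi_pos]; nlinarith [Real.pi_pos])
  rw [abs_mul, abs_of_pos Real.pi_pos] at h4
  have h5 : 2 / Real.pi * (Real.pi * |t|) = 2 * |t| := by
    field_simp
  linarith

lemma geom_bound (M β : ℝ) (A B : ℕ) (hM : 0 ≤ M) (h : (B : ℝ) ≤ A + M) :
    ‖∑ n ∈ Finset.Ico A B, e (n * β)‖ ≤ hh M β := by
  set S := ∑ n ∈ Finset.Ico A B, e (n * β) with hS
  have hnd := nd_nonneg β
  have h1 : ‖S‖ ≤ M := by
    calc ‖S‖ ≤ ∑ n ∈ Finset.Ico A B, ‖e (n * β)‖ := norm_sum_le _ _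
      _ = ((B - A : ℕ) : ℝ) := by simp [norm_e]
      _ ≤ M := by
        rcases le_total A B with hh | hh
        · rw [Nat.cast_sub hh]; linarith
        · rw [Nat.sub_eq_zero_of_le hh]; simpa using hM
  have h2 : ‖S‖ * (4 * nd β) ≤ 2 := by
    have h3 : ‖S * (e β - 1)‖ ≤ 2 := by
      rcases le_total A B with hAB | hAB
      · have : S * (e β - 1) = e (B * β) - e (A * β) := by
          rw [hS, Finset.sum_mul, ← Finset.sum_Ico_sub (fun n : ℕ => e (n * β)) hAB]
          apply Finset.sum_congr rfl
          intro n _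
          have : ((n + 1 : ℕ) : ℝ) * β = n * β + β := by push_cast; ring
          rw [this, e_add]; ring
        rw [this]
        calc _ ≤ ‖e (B * β)‖ + ‖e (A * β)‖ := norm_sub_le _ _
          _ = 2 := by rw [norm_e, norm_e]; norm_num
      · rw [hS, Finset.Ico_eq_empty_of_le hAB]; simp
    rw [norm_mul] at h3
    exact (mul_le_mul_of_nonneg_left (norm_e_sub_one β) (norm_nonneg _)).trans h3
  unfold hh
  rw [le_div_iff₀ (by positivity)]
  nlinarith

lemma fiber_card (α : ℝ) (a q : ℕ) (hq : 0 < q) (hc : Nat.gcd a q = 1)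
    (hα : |α - (a : ℝ) / q| < 1 / (q : ℝ) ^ 2) (n0 : ℤ) (k : ℕ) :
    ((Finset.range q).filter
      (fun j : ℕ => ⌊(q : ℝ) * Int.fract (α * ((n0 : ℝ) + j))⌋₊ = k)).card ≤ 3 := by
  set F := (Finset.range q).filter
      (fun j : ℕ => ⌊(q : ℝ) * Int.fract (α * ((n0 : ℝ) + j))⌋₊ = k) with hF
  rcases F.eq_empty_or_nonempty with h0 | ⟨j1, hj1⟩
  · rw [h0]; simp
  have hq' : (0 : ℝ) < q := by exact_mod_cast hq
  have hqne : (q : ℝ) ≠ 0 := hq'.ne'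
  have hcard : ({-1, 0, 1} : Finset (ZMod q)).card ≤ 3 := Finset.card_le_three
  refine le_trans ?_ hcard
  apply Finset.card_le_card_of_injOn
    (fun j : ℕ => (((a : ℤ) * ((j : ℤ) - j1) : ℤ) : ZMod q))
  · intro j hj
    have hj : j ∈ F := hj
    rw [hF, Finset.mem_filter, Finset.mem_range] at hj hj1
    obtain ⟨hjq, hjk⟩ := hj
    obtain ⟨hj1q, hj1k⟩ := hj1
    set y := α * ((n0 : ℝ) + j) with hy
    set y1 := α * ((n0 : ℝ) + j1) with hy1
    have b1 := Nat.floor_le (mul_nonneg hq'.le (Int.fract_nonneg y))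
    have b2 := Nat.lt_floor_add_one ((q : ℝ) * Int.fract y)
    have b3 := Nat.floor_le (mul_nonneg hq'.le (Int.fract_nonneg y1))
    have b4 := Nat.lt_floor_add_one ((q : ℝ) * Int.fract y1)
    rw [hjk] at b1 b2
    rw [hj1k] at b3 b4
    set m : ℤ := ⌊y⌋ - ⌊y1⌋ with hm
    have e1 : Int.fract y = y - ⌊y⌋ := rfl
    have e2 : Int.fract y1 = y1 - ⌊y1⌋ := rfl
    have c1 : |(q : ℝ) * (α * ((j : ℝ) - j1) - m)| < 1 := by
      have : (q : ℝ) * (α * ((j : ℝ) - j1) - m) =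
          q * Int.fract y - q * Int.fract y1 := by
        rw [e1, e2, hm, hy, hy1]; push_cast; ring
      rw [this, abs_lt]; constructor <;> linarith
    have c2 : |(j : ℝ) - j1| ≤ q := by
      have h1 : (j : ℝ) < q := by exact_mod_cast hjq
      have h2 : (j1 : ℝ) < q := by exact_mod_cast hj1q
      have h3 : (0 : ℝ) ≤ j := by positivity
      have h4 : (0 : ℝ) ≤ j1 := by positivity
      rw [abs_le]; constructor <;> linarith
    have c3 : |(q : ℝ) * (((a : ℝ) / q - α) * ((j : ℝ) - j1))| ≤ 1 := by
      rw [abs_mul, abs_mul, abs_of_pos hq', abs_sub_comm]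
      calc (q : ℝ) * (|α - a / q| * |(j : ℝ) - j1|) ≤ q * (1 / (q : ℝ) ^ 2 * q) := by
            gcongr
        _ = 1 := by field_simp
    have c4 : |(((a : ℤ) * ((j : ℤ) - j1) - m * q : ℤ) : ℝ)| < 2 := by
      have : (((a : ℤ) * ((j : ℤ) - j1) - m * q : ℤ) : ℝ) =
          (q : ℝ) * (((a : ℝ) / q - α) * ((j : ℝ) - j1)) +
          (q : ℝ) * (α * ((j : ℝ) - j1) - m) := by
        push_cast; field_simp; ring
      rw [this]
      exact (abs_add_le _ _).trans_lt (by linarith)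
    set r : ℤ := (a : ℤ) * ((j : ℤ) - j1) - m * q with hr
    have c5 : |r| < 2 := by exact_mod_cast c4
    have c6 : (((a : ℤ) * ((j : ℤ) - j1) : ℤ) : ZMod q) = (r : ZMod q) := by
      have : (a : ℤ) * ((j : ℤ) - j1) = r + m * q := by rw [hr]; ring
      rw [this]; simp
    show (((a : ℤ) * ((j : ℤ) - j1) : ℤ) : ZMod q) ∈ (({-1, 0, 1} : Finset (ZMod q)) : Set _)
    rw [c6]
    rw [abs_lt] at c5
    have : r = -1 ∨ r = 0 ∨ r = 1 := by omega
    rcases this with h | h | h <;> rw [h] <;> simp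
  · intro j hj j' hj' hjj
    have hj : j ∈ F := hj
    have hj' : j' ∈ F := hj'
    rw [hF, Finset.mem_filter, Finset.mem_range] at hj hj'
    have hjj : (((a : ℤ) * ((j : ℤ) - j1) : ℤ) : ZMod q) =
      (((a : ℤ) * ((j' : ℤ) - j1) : ℤ) : ZMod q) := hjj
    rw [ZMod.intCast_eq_intCast_iff_dvd_sub] at hjj
    have : (a : ℤ) * ((j' : ℤ) - j1) - (a : ℤ) * ((j : ℤ) - j1) = a * ((j' : ℤ) - j) := by ring
    rw [this] at hjj
    have hcop : IsCoprime (q : ℤ) (a : ℤ) := by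
      rw [Nat.isCoprime_iff_coprime]; exact (Nat.Coprime.symm hc)
    have hd := hcop.dvd_of_dvd_mul_left hjj
    have : (j' : ℤ) - j = 0 := by
      apply Int.eq_zero_of_abs_lt_dvd hd
      rw [abs_lt]; constructor <;> omega
    omega

lemma sum_H (M : ℝ) (hM : 0 ≤ M) (q : ℕ) (hq : 0 < q) :
    ∑ k ∈ Finset.range q, 2 * M / (1 + M * ((k : ℝ) / q)) ≤ 2 * (M + q * (1 + Real.log q)) := by
  have hq' : (0 : ℝ) < q := by exact_mod_cast hq
  obtain ⟨p, rfl⟩ : ∃ p, q = p + 1 := ⟨q - 1, by omega⟩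
  rw [Finset.sum_range_succ']
  have h1 : ∑ k ∈ Finset.range p, 2 * M / (1 + M * (((k + 1 : ℕ) : ℝ) / ((p + 1 : ℕ) : ℝ))) ≤
      2 * (p + 1 : ℕ) * (harmonic p : ℝ) := by
    rw [harmonic]; push_cast
    rw [Finset.mul_sum]
    apply Finset.sum_le_sum
    intro k _
    have : (0 : ℝ) < p + 1 := by positivity
    have : (0 : ℝ) < k + 1 := by positivity
    rw [div_le_iff₀ (by positivity)]
    field_simp
    nlinarith
  have h2 := harmonic_le_one_add_log p
  have h3 : Real.log p ≤ Real.log (p + 1 : ℕ) := by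
    rcases Nat.eq_zero_or_pos p with h | h
    · rw [h]; simp
    · apply Real.log_le_log (by exact_mod_cast h); push_cast; linarith
  have h4 : 2 * ((p + 1 : ℕ) : ℝ) * (harmonic p : ℝ) ≤ 2 * (p + 1 : ℕ) * (1 + Real.log (p + 1 : ℕ)) := by
    gcongr; linarith
  simp only [Nat.cast_zero, zero_div, mul_zero, add_zero, div_one]
  linarith

lemma block_bound (α : ℝ) (a q : ℕ) (hq : 0 < q) (hc : Nat.gcd a q = 1)
    (hα : |α - (a : ℝ) / q| < 1 / (q : ℝ) ^ 2) (n0 : ℤ) (M : ℝ) (hM : 0 ≤ M) :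
    ∑ j ∈ Finset.range q, hh M (α * ((n0 : ℝ) + (j : ℕ))) ≤
      12 * (M + q * (1 + Real.log q)) := by
  have hq' : (0 : ℝ) < q := by exact_mod_cast hq
  set key : ℕ → ℕ := fun j => ⌊(q : ℝ) * Int.fract (α * ((n0 : ℝ) + j))⌋₊ with hkey
  set H : ℕ → ℝ := fun k => 2 * M / (1 + M * ((k : ℝ) / q)) with hH
  have hH0 : ∀ k, 0 ≤ H k := fun k => by simp only [hH]; positivity
  have hmaps : ∀ j ∈ Finset.range q, key j ∈ Finset.range q := by
    intro j _
    rw [Finset.mem_range]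
    apply (Nat.floor_lt (mul_nonneg hq'.le (Int.fract_nonneg _))).2
    have := Int.fract_lt_one (α * ((n0 : ℝ) + j))
    nlinarith
  have hpt : ∀ j ∈ Finset.range q, hh M (α * ((n0 : ℝ) + (j : ℕ))) ≤
      H (key j) + H (q - 1 - key j) := by
    intro j hj
    have hk := hmaps j hj
    rw [Finset.mem_range] at hk
    set y := α * ((n0 : ℝ) + (j : ℕ)) with hy
    have b1 := Nat.floor_le (mul_nonneg hq'.le (Int.fract_nonneg y))
    have b2 := Nat.lt_floor_add_one ((q : ℝ) * Int.fract y)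
    have b1 : (key j : ℝ) ≤ q * Int.fract y := b1
    have b2 : q * Int.fract y < key j + 1 := b2
    have hnd : nd y = min (Int.fract y) (1 - Int.fract y) := abs_sub_round_eq_min y
    have hn0 := nd_nonneg y
    rcases min_choice (Int.fract y) (1 - Int.fract y) with h | h
    · rw [h] at hnd
      have : hh M y ≤ H (key j) := by
        simp only [hh, hH]
        have : (key j : ℝ) / q ≤ nd y := by
          rw [hnd, div_le_iff₀ hq']; linarith
        gcongr
      linarith [hH0 (q - 1 - key j)]
    · rw [h] at hnd
      have : hh M y ≤ H (q - 1 - key j) := by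
        simp only [hh, hH]
        have : ((q - 1 - key j : ℕ) : ℝ) / q ≤ nd y := by
          rw [hnd, div_le_iff₀ hq']
          have : ((q - 1 - key j : ℕ) : ℝ) = q - 1 - key j := by
            rw [Nat.cast_sub (by omega), Nat.cast_sub (by omega)]; simp
          rw [this]; linarith
        gcongr
      linarith [hH0 (key j)]
  refine (Finset.sum_le_sum hpt).trans ?_
  rw [← Finset.sum_fiberwise_of_maps_to hmaps]
  have : ∀ k ∈ Finset.range q, ∑ j ∈ (Finset.range q).filter (fun j => key j = k),
      (H (key j) + H (q - 1 - key j)) ≤ 3 * (H k + H (q - 1 - k)) := by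
    intro k _
    have h1 : ∑ j ∈ (Finset.range q).filter (fun j => key j = k),
      (H (key j) + H (q - 1 - key j)) =
      ∑ j ∈ (Finset.range q).filter (fun j => key j = k), (H k + H (q - 1 - k)) := by
      apply Finset.sum_congr rfl
      intro j hj
      rw [(Finset.mem_filter.1 hj).2]
    rw [h1, Finset.sum_const, nsmul_eq_mul]
    have : ((Finset.range q).filter (fun j => key j = k)).card ≤ 3 :=
      fiber_card α a q hq hc hα n0 k
    have h3 : (((Finset.range q).filter (fun j => key j = k)).card : ℝ) ≤ 3 :=
      Nat.cast_le_ofNat.2 this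
    exact mul_le_mul_of_nonneg_right h3 (add_nonneg (hH0 _) (hH0 _))
  refine (Finset.sum_le_sum this).trans ?_
  rw [← Finset.mul_sum, Finset.sum_add_distrib, Finset.sum_range_reflect]
  have := sum_H M hM q hq
  simp only [hH]
  linarith

lemma blocks_bound (α : ℝ) (a q : ℕ) (hq : 0 < q) (hc : Nat.gcd a q = 1)
    (hα : |α - (a : ℝ) / q| < 1 / (q : ℝ) ^ 2) (n0 : ℤ) (M : ℝ) (hM : 0 ≤ M) (R : ℕ) :
    ∑ j ∈ Finset.range (q * R), hh M (α * ((n0 : ℝ) + (j : ℕ))) ≤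
      R * (12 * (M + q * (1 + Real.log q))) := by
  induction R with
  | zero => simp
  | succ R ih =>
    rw [Nat.mul_succ, Finset.sum_range_add]
    have := block_bound α a q hq hc hα (n0 + (q * R : ℕ)) M hM
    have h2 : ∑ x ∈ Finset.range q, hh M (α * ((n0 : ℝ) + ((q * R + x : ℕ) : ℝ))) =
      ∑ j ∈ Finset.range q, hh M (α * (((n0 + (q * R : ℕ) : ℤ) : ℝ) + (j : ℕ))) := by
      apply Finset.sum_congr rfl
      intro j _
      congr 2; push_cast; ring
    rw [h2]; push_cast at *
    linarith

lemma range_bound (α : ℝ) (a q : ℕ) (hq : 0 < q) (hc : Nat.gcd a q = 1)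
    (hα : |α - (a : ℝ) / q| < 1 / (q : ℝ) ^ 2) (n0 : ℤ) (M : ℝ) (hM : 0 ≤ M) (K : ℕ) :
    ∑ j ∈ Finset.range K, hh M (α * ((n0 : ℝ) + (j : ℕ))) ≤
      ((K : ℝ) / q + 1) * (12 * (M + q * (1 + Real.log q))) := by
  have hq' : (0 : ℝ) < q := by exact_mod_cast hq
  have hlog : 0 ≤ Real.log q := Real.log_natCast_nonneg q
  have h1 : K ≤ q * (K / q + 1) := (Nat.lt_mul_div_succ K hq).le
  calc _ ≤ ∑ j ∈ Finset.range (q * (K / q + 1)), hh M (α * ((n0 : ℝ) + (j : ℕ))) := by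
        apply Finset.sum_le_sum_of_subset_of_nonneg
        · exact Finset.range_subset_range.2 h1
        · intros; exact hh_nonneg hM _
    _ ≤ _ := blocks_bound α a q hq hc hα n0 M hM _
    _ ≤ _ := by
      have : ((K / q + 1 : ℕ) : ℝ) ≤ (K : ℝ) / q + 1 := by
        push_cast; linarith [@Nat.cast_div_le ℝ _ _ _ K q]
      gcongr

lemma nd_small (α : ℝ) (a q : ℕ) (hq : 0 < q) (hc : Nat.gcd a q = 1)
    (hα : |α - (a : ℝ) / q| < 1 / (q : ℝ) ^ 2) (n : ℕ) (hn : 0 < n) (hnq : 2 * n ≤ q) :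
    1 / (2 * (q : ℝ)) ≤ nd (α * n) := by
  have hq' : (0 : ℝ) < q := by exact_mod_cast hq
  set m := round (α * n) with hm
  have h1 : (a : ℤ) * n - m * q ≠ 0 := by
    intro h
    have hd : (q : ℤ) ∣ (a : ℤ) * n := ⟨m, by linarith⟩
    have hcop : IsCoprime (q : ℤ) (a : ℤ) := by
      rw [Nat.isCoprime_iff_coprime]; exact (Nat.Coprime.symm hc)
    have hd := hcop.dvd_of_dvd_mul_left hd
    have := Int.le_of_dvd (by omega) hd
    omega
  have h2 : (1 : ℝ) ≤ |(a : ℝ) * n - m * q| := by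
    have := Int.one_le_abs h1
    exact_mod_cast this
  have h3 : (a : ℝ) * n - m * q = q * (α * n - m) - (q * n) * (α - a / q) := by
    field_simp; ring
  have h4 : |(a : ℝ) * n - m * q| ≤ q * nd (α * n) + (q * n) * (1 / (q : ℝ) ^ 2) := by
    rw [h3]
    refine (abs_sub _ _).trans ?_
    rw [abs_mul, abs_mul, abs_of_pos hq', abs_of_nonneg (by positivity : (0 : ℝ) ≤ q * n)]
    have : |α * n - m| = nd (α * n) := rfl
    rw [this]
    gcongr
  have h5 : (q * n : ℝ) * (1 / (q : ℝ) ^ 2) ≤ 1 / 2 := by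
    have : (2 * n : ℝ) ≤ q := by exact_mod_cast hnq
    rw [mul_one_div, div_le_iff₀ (by positivity)]; nlinarith
  rw [div_le_iff₀ (by positivity)]
  nlinarith

lemma hh_of_nd {M β Q : ℝ} (hM : 0 ≤ M) (hQ : 0 < Q) (h : 1 / (2 * Q) ≤ nd β) :
    hh M β ≤ 2 * hh (2 * Q) β := by
  have h0 : 0 < nd β := lt_of_lt_of_le (by positivity) h
  rw [div_le_iff₀ (by positivity)] at h
  unfold hh
  rw [← mul_div_assoc, div_le_div_iff₀ (by positivity) (by positivity)]
  nlinarith [mul_nonneg hM h0.le, mul_nonneg hM hQ.le, mul_nonneg (mul_nonneg hM hQ.le) h0.le]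

lemma first_block (α : ℝ) (a q : ℕ) (hq : 0 < q) (hc : Nat.gcd a q = 1)
    (hα : |α - (a : ℝ) / q| < 1 / (q : ℝ) ^ 2) (X : ℝ) (hX : 0 ≤ X) :
    ∑ n ∈ Finset.range q, hh (X / n) (α * n) ≤
      24 * (X / q) + 84 * (q * (1 + Real.log q)) := by
  have hq' : (0 : ℝ) < q := by exact_mod_cast hq
  have hlog : 0 ≤ Real.log q := Real.log_natCast_nonneg q
  have h1 := block_bound α a q hq hc hα 0 (2 * q) (by positivity)
  have h2 := block_bound α a q hq hc hα 0 (2 * X / q) (by positivity)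
  simp only [Int.cast_zero, zero_add] at h1 h2
  have hpt : ∀ n ∈ Finset.range q, hh (X / n) (α * n) ≤
      2 * hh (2 * q) (α * n) + hh (2 * X / q) (α * n) := by
    intro n _
    have p1 : 0 ≤ hh (2 * q) (α * n) := hh_nonneg (by positivity) _
    have p2 : 0 ≤ hh (2 * X / q) (α * n) := hh_nonneg (by positivity) _
    rcases Nat.eq_zero_or_pos n with h0 | h0
    · subst h0
      have : hh (X / (0 : ℕ)) (α * (0 : ℕ)) = 0 := by simp [hh]
      rw [this]; positivity
    have hn' : (0 : ℝ) < n := by exact_mod_cast h0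
    rcases le_or_gt (2 * n) q with h | h
    · have := hh_of_nd (M := X / n) (by positivity) hq' (nd_small α a q hq hc hα n h0 h)
      linarith
    · have hle : X / n ≤ 2 * X / q := by
        have : (q : ℝ) < 2 * n := by exact_mod_cast h
        rw [div_le_div_iff₀ hn' hq']; nlinarith
      have := hh_mono (by positivity) hle (α * n)
      linarith
  refine (Finset.sum_le_sum hpt).trans ?_
  rw [Finset.sum_add_distrib, ← Finset.mul_sum]
  have : (q : ℝ) ≤ q * (1 + Real.log q) := by nlinarith
  have h3 : 2 * X / q = 2 * (X / q) := by ring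
  rw [h3] at h2 ⊢
  nlinarith

lemma typeI_blocks (α : ℝ) (a q : ℕ) (hq : 0 < q) (hc : Nat.gcd a q = 1)
    (hα : |α - (a : ℝ) / q| < 1 / (q : ℝ) ^ 2) (X : ℝ) (hX : 0 ≤ X) (R : ℕ) :
    ∑ n ∈ Finset.range (q * (R + 1)), hh (X / n) (α * n) ≤
      24 * (X / q) + 84 * (q * (1 + Real.log q)) + 12 * (X / q) * (harmonic R : ℝ) +
        12 * (R * (q * (1 + Real.log q))) := by
  have hq' : (0 : ℝ) < q := by exact_mod_cast hq
  induction R with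
  | zero =>
    have := first_block α a q hq hc hα X hX
    simpa using this
  | succ R ih =>
    rw [Nat.mul_succ, Finset.sum_range_add]
    have h1 := block_bound α a q hq hc hα ((q * (R + 1) : ℕ)) (X / (q * (R + 1) : ℕ)) (by positivity)
    have h2 : ∑ x ∈ Finset.range q, hh (X / ((q * (R + 1) + x : ℕ) : ℝ))
        (α * ((q * (R + 1) + x : ℕ) : ℝ)) ≤
      ∑ j ∈ Finset.range q, hh (X / (q * (R + 1) : ℕ))
        (α * ((((q * (R + 1) : ℕ) : ℤ) : ℝ) + (j : ℕ))) := by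
      apply Finset.sum_le_sum
      intro j _
      have e1 : α * ((((q * (R + 1) : ℕ) : ℤ) : ℝ) + (j : ℕ)) = α * ((q * (R + 1) + j : ℕ) : ℝ) := by
        push_cast; ring
      rw [e1]
      apply hh_mono (by positivity)
      have : 0 < q * (R + 1) := by positivity
      have : (0 : ℝ) < (q * (R + 1) : ℕ) := by exact_mod_cast this
      gcongr
      omega
    have h3 : X / ((q * (R + 1) : ℕ) : ℝ) = (X / q) * ((R : ℝ) + 1)⁻¹ := by
      push_cast; field_simp
    rw [harmonic_succ]
    rw [h3] at h1 h2
    push_cast at *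
    nlinarith

lemma typeI_bound (α : ℝ) (a q : ℕ) (hq : 0 < q) (hc : Nat.gcd a q = 1)
    (hα : |α - (a : ℝ) / q| < 1 / (q : ℝ) ^ 2) (X : ℝ) (hX : 0 ≤ X) (D : ℕ) (l : ℝ)
    (hql : Real.log q ≤ l) (hDl : Real.log D ≤ l) :
    ∑ n ∈ Finset.Ioc 0 D, hh (X / n) (α * n) ≤ 84 * (X / q + D + q) * (1 + l) := by
  have hq' : (0 : ℝ) < q := by exact_mod_cast hq
  have hlog : 0 ≤ Real.log q := Real.log_natCast_nonneg q
  have hl : 0 ≤ l := hlog.trans hql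
  have h1 : D < q * (D / q + 1) := Nat.lt_mul_div_succ D hq
  have h2 : ∑ n ∈ Finset.Ioc 0 D, hh (X / n) (α * n) ≤
      ∑ n ∈ Finset.range (q * (D / q + 1)), hh (X / n) (α * n) := by
    apply Finset.sum_le_sum_of_subset_of_nonneg
    · intro n hn
      rw [Finset.mem_Ioc] at hn
      rw [Finset.mem_range]; omega
    · intros; exact hh_nonneg (by positivity) _
  refine (h2.trans (typeI_blocks α a q hq hc hα X hX (D / q))).trans ?_
  have h3 : (harmonic (D / q) : ℝ) ≤ 1 + l := by
    refine (harmonic_le_one_add_log _).trans ?_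
    have : Real.log (D / q : ℕ) ≤ Real.log D := by
      rcases Nat.eq_zero_or_pos (D / q) with h | h
      · rw [h]; simpa using Real.log_natCast_nonneg D
      · apply Real.log_le_log (by exact_mod_cast h)
        exact_mod_cast Nat.div_le_self D q
    linarith
  have h4 : ((D / q : ℕ) : ℝ) * q ≤ D := by exact_mod_cast Nat.div_mul_le_self D q
  have hY : 0 ≤ X / q := by positivity
  have t1 : (q : ℝ) * (1 + Real.log q) ≤ q * (1 + l) := by gcongr
  have t2 : ((D / q : ℕ) : ℝ) * (q * (1 + Real.log q)) ≤ D * (1 + l) := by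
    rw [← mul_assoc]; gcongr
  have t3 : X / q * (harmonic (D / q) : ℝ) ≤ X / q * (1 + l) := by gcongr
  have t4 : X / q ≤ X / q * (1 + l) := by nlinarith
  have t5 : 0 ≤ (D : ℝ) * (1 + l) := by positivity
  nlinarith

lemma sum_conv (f g : ArithmeticFunction ℝ) (N : ℕ) (z : ℕ → ℂ) :
    ∑ n ∈ Finset.Ioc 0 N, ((f * g) n : ℂ) * z n =
      ∑ d ∈ Finset.Ioc 0 N, (f d : ℂ) * ∑ k ∈ Finset.Ioc 0 (N / d), (g k : ℂ) * z (d * k) := by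
  have h1 : ∀ n ∈ Finset.Ioc 0 N, ((f * g) n : ℂ) * z n =
      ∑ x ∈ (Finset.Ioc 0 N ×ˢ Finset.Ioc 0 N).filter (fun x : ℕ × ℕ => x.1 * x.2 = n),
        (f x.1 : ℂ) * ((g x.2 : ℂ) * z (x.1 * x.2)) := by
    intro n hn
    rw [Finset.mem_Ioc] at hn
    rw [ArithmeticFunction.mul_apply,
      Nat.divisorsAntidiagonal_eq_prod_filter_of_le hn.1.ne' hn.2]
    push_cast
    rw [Finset.sum_mul]
    apply Finset.sum_congr rfl
    intro x hx
    rw [(Finset.mem_filter.1 hx).2]; ring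
  rw [Finset.sum_congr rfl h1]
  simp_rw [Finset.sum_filter]
  rw [Finset.sum_comm, Finset.sum_product]
  apply Finset.sum_congr rfl
  intro d hd
  rw [Finset.mem_Ioc] at hd
  rw [Finset.mul_sum]
  have h2 : Finset.Ioc 0 (N / d) ⊆ Finset.Ioc 0 N :=
    Finset.Ioc_subset_Ioc_right (Nat.div_le_self _ _)
  rw [← Finset.sum_subset h2]
  · apply Finset.sum_congr rfl
    intro k hk
    rw [Finset.mem_Ioc, Nat.le_div_iff_mul_le hd.1] at hk
    rw [Finset.sum_ite_eq, if_pos]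
    rw [Finset.mem_Ioc]
    exact ⟨Nat.mul_pos hd.1 hk.1, by rw [mul_comm]; exact hk.2⟩
  · intro k hk hk'
    rw [Finset.mem_Ioc] at hk
    rw [Finset.mem_Ioc, Nat.le_div_iff_mul_le hd.1] at hk'
    rw [Finset.sum_ite_eq, if_neg]
    rw [Finset.mem_Ioc]
    intro h
    exact hk' ⟨hk.1, by rw [mul_comm]; exact h.2⟩

lemma abel_bound (w : ℕ → ℝ) (hw : Monotone w) (hw0 : w 0 = 0) (z : ℕ → ℂ) (K : ℕ) (B : ℝ)
    (hB : ∀ i, ‖∑ k ∈ Finset.Ioc i K, z k‖ ≤ B) :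
    ‖∑ k ∈ Finset.Ioc 0 K, (w k : ℂ) * z k‖ ≤ w K * B := by
  have h1 : ∀ k, (w k : ℂ) = ∑ i ∈ Finset.range k, ((w (i + 1) - w i : ℝ) : ℂ) := by
    intro k
    rw [← Complex.ofReal_sum, Finset.sum_range_sub, hw0, sub_zero]
  have h2 : ∑ k ∈ Finset.Ioc 0 K, (w k : ℂ) * z k =
      ∑ i ∈ Finset.range K, ((w (i + 1) - w i : ℝ) : ℂ) * ∑ k ∈ Finset.Ioc i K, z k := by
    simp_rw [Finset.mul_sum]
    rw [← Finset.sum_comm' (s := Finset.Ioc 0 K) (t := fun k => Finset.range k)]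
    · apply Finset.sum_congr rfl
      intro k _
      rw [h1 k, Finset.sum_mul]
    · intro x y
      simp only [Finset.mem_Ioc, Finset.mem_range]
      omega
  rw [h2]
  refine (norm_sum_le _ _).trans ?_
  calc _ ≤ ∑ i ∈ Finset.range K, (w (i + 1) - w i) * B := by
        apply Finset.sum_le_sum
        intro i _
        have h0 : 0 ≤ w (i + 1) - w i := sub_nonneg.2 (hw (Nat.le_succ i))
        rw [norm_mul, Complex.norm_real, Real.norm_eq_abs, abs_of_nonneg h0]
        exact mul_le_mul_of_nonneg_left (hB i) h0
    _ = w K * B := by rw [← Finset.sum_mul, Finset.sum_range_sub, hw0, sub_zero]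

lemma typeI_sum (α : ℝ) (a q : ℕ) (hq : 0 < q) (hc : Nat.gcd a q = 1)
    (hα : |α - (a : ℝ) / q| < 1 / (q : ℝ) ^ 2) (X : ℝ) (hX : 0 ≤ X) (D N : ℕ) (l : ℝ)
    (hql : Real.log q ≤ l) (hDl : Real.log D ≤ l) (hN : (N : ℝ) ≤ X)
    (f w : ℕ → ℝ) (c W : ℝ) (hc0 : 0 ≤ c)
    (hf : ∀ d, 0 < d → d ≤ D → |f d| ≤ c) (hf0 : ∀ d, D < d → f d = 0)
    (hw : Monotone w) (hw0 : w 0 = 0) (hW : w N ≤ W) :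
    ‖∑ d ∈ Finset.Ioc 0 N, (f d : ℂ) *
      ∑ k ∈ Finset.Ioc 0 (N / d), (w k : ℂ) * e (((d * k : ℕ) : ℝ) * α)‖ ≤
      c * W * (84 * (X / q + D + q) * (1 + l)) := by
  have hW0 : 0 ≤ W := by
    have := hw (Nat.zero_le N); linarith
  refine (norm_sum_le _ _).trans ?_
  have hpt : ∀ d ∈ Finset.Ioc 0 N, ‖(f d : ℂ) *
      ∑ k ∈ Finset.Ioc 0 (N / d), (w k : ℂ) * e (((d * k : ℕ) : ℝ) * α)‖ ≤
      if d ≤ D then c * W * hh (X / d) (α * d) else 0 := by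
    intro d hd
    rw [Finset.mem_Ioc] at hd
    have hd' : (0 : ℝ) < d := by exact_mod_cast hd.1
    split_ifs with h
    · rw [norm_mul, Complex.norm_real, Real.norm_eq_abs, mul_assoc]
      have hX0 : 0 ≤ hh (X / d) (α * d) := hh_nonneg (by positivity) _
      have hin : ‖∑ k ∈ Finset.Ioc 0 (N / d), (w k : ℂ) * e (((d * k : ℕ) : ℝ) * α)‖ ≤
          w (N / d) * hh (X / d) (α * d) := by
        apply abel_bound w hw hw0
        intro i
        have e1 : Finset.Ioc i (N / d) = Finset.Ico (i + 1) (N / d + 1) := by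
          ext x; simp only [Finset.mem_Ioc, Finset.mem_Ico]; omega
        have e2 : ∑ k ∈ Finset.Ioc i (N / d), e (((d * k : ℕ) : ℝ) * α) =
            ∑ k ∈ Finset.Ico (i + 1) (N / d + 1), e (k * (α * d)) := by
          rw [e1]
          apply Finset.sum_congr rfl
          intro k _
          congr 1; push_cast; ring
        rw [e2]
        apply geom_bound _ _ _ _ (by positivity)
        have h1 : ((N / d : ℕ) : ℝ) ≤ X / d :=
          Nat.cast_div_le.trans (by gcongr)
        have h2 : (0 : ℝ) ≤ i := by positivity
        push_cast
        linarith
      have h3 : w (N / d) ≤ W := (hw (Nat.div_le_self _ _)).trans hW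
      exact mul_le_mul (hf d hd.1 h) (hin.trans (mul_le_mul_of_nonneg_right h3 hX0))
        (norm_nonneg _) hc0
    · rw [hf0 d (by omega)]; simp
  refine (Finset.sum_le_sum hpt).trans ?_
  rw [← Finset.sum_filter]
  calc _ ≤ ∑ d ∈ Finset.Ioc 0 D, c * W * hh (X / d) (α * d) := by
        apply Finset.sum_le_sum_of_subset_of_nonneg
        · intro d hd
          simp only [Finset.mem_filter, Finset.mem_Ioc] at hd ⊢
          omega
        · intro d _ _
          have : 0 ≤ hh (X / d) (α * d) := hh_nonneg (by positivity) _
          positivity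
    _ = c * W * ∑ d ∈ Finset.Ioc 0 D, hh (X / d) (α * d) := by rw [Finset.mul_sum]
    _ ≤ _ := mul_le_mul_of_nonneg_left (typeI_bound α a q hq hc hα X hX D l hql hDl)
        (by positivity)

lemma typeII_block (α : ℝ) (a q : ℕ) (hq : 0 < q) (hc : Nat.gcd a q = 1)
    (hα : |α - (a : ℝ) / q| < 1 / (q : ℝ) ^ 2) (N D : ℕ) (hD : 0 < D)
    (f b : ℕ → ℝ) (W : ℝ) (hf : ∀ d, |f d| ≤ 1)
    (hb : ∀ k, 0 < k → k ≤ N → |b k| ≤ W) (hW : 0 ≤ W) :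
    ‖∑ d ∈ Finset.Ico D (2 * D), (f d : ℂ) *
      ∑ k ∈ Finset.Ioc 0 (N / d), (b k : ℂ) * e (((d * k : ℕ) : ℝ) * α)‖ ^ 2 ≤
      D * (W ^ 2 * ((N / D : ℕ) * ((((N / D : ℕ) : ℝ) / q + 1) *
        (12 * (D + q * (1 + Real.log q)))))) := by
  set K := N / D with hK
  set s : ℕ → ℂ := fun d => ∑ k ∈ Finset.Ioc 0 (N / d), (b k : ℂ) * e (((d * k : ℕ) : ℝ) * α)
    with hs
  have h1 : ‖∑ d ∈ Finset.Ico D (2 * D), (f d : ℂ) * s d‖ ^ 2 ≤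
      D * ∑ d ∈ Finset.Ico D (2 * D), ‖s d‖ ^ 2 := by
    have t1 : ‖∑ d ∈ Finset.Ico D (2 * D), (f d : ℂ) * s d‖ ≤
        ∑ d ∈ Finset.Ico D (2 * D), ‖s d‖ := by
      refine (norm_sum_le _ _).trans (Finset.sum_le_sum ?_)
      intro d _
      rw [norm_mul, Complex.norm_real, Real.norm_eq_abs]
      have := mul_le_mul_of_nonneg_right (hf d) (norm_nonneg (s d))
      linarith
    have t2 := sq_sum_le_card_mul_sum_sq (s := Finset.Ico D (2 * D)) (f := fun d => ‖s d‖)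
    have t3 : (((Finset.Ico D (2 * D)).card : ℕ) : ℝ) = D := by
      rw [Nat.card_Ico]; congr 1; omega
    rw [t3] at t2
    exact (pow_le_pow_left₀ (norm_nonneg _) t1 2).trans t2
  refine h1.trans (mul_le_mul_of_nonneg_left ?_ (by positivity))
  -- expand the squares
  have h2 : ∀ d ∈ Finset.Ico D (2 * D), ((‖s d‖ ^ 2 : ℝ) : ℂ) =
      ∑ k₁ ∈ Finset.Ioc 0 K, ∑ k₂ ∈ Finset.Ioc 0 K,
        if d * k₁ ≤ N ∧ d * k₂ ≤ N then
          ((b k₁ : ℂ) * b k₂) * e (d * (α * ((k₁ : ℝ) - k₂))) else 0 := by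
    intro d hd
    rw [Finset.mem_Ico] at hd
    have hd0 : 0 < d := by omega
    have hs' : s d = ∑ k ∈ Finset.Ioc 0 K,
        if d * k ≤ N then (b k : ℂ) * e (((d * k : ℕ) : ℝ) * α) else 0 := by
      rw [← Finset.sum_filter]
      apply Finset.sum_congr _ (fun _ _ => rfl)
      ext k
      simp only [Finset.mem_filter, Finset.mem_Ioc]
      rw [Nat.le_div_iff_mul_le hd0, hK, Nat.le_div_iff_mul_le hD]
      constructor
      · rintro ⟨h, h'⟩
        refine ⟨⟨h, ?_⟩, by rwa [mul_comm]⟩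
        exact (Nat.mul_le_mul_left k hd.1).trans h'
      · rintro ⟨⟨h, _⟩, h'⟩
        exact ⟨h, by rwa [mul_comm]⟩
    have : ((‖s d‖ ^ 2 : ℝ) : ℂ) = s d * (starRingEnd ℂ) (s d) := by
      rw [Complex.mul_conj, Complex.normSq_eq_norm_sq]
    rw [this, hs', map_sum, Finset.sum_mul_sum]
    apply Finset.sum_congr rfl
    intro k₁ _
    apply Finset.sum_congr rfl
    intro k₂ _
    by_cases c1 : d * k₁ ≤ N
    · by_cases c2 : d * k₂ ≤ N
      · rw [if_pos c1, if_pos c2, if_pos ⟨c1, c2⟩, map_mul, Complex.conj_ofReal, ← e_neg]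
        have : (d : ℝ) * (α * ((k₁ : ℝ) - k₂)) =
          ((d * k₁ : ℕ) : ℝ) * α + -(((d * k₂ : ℕ) : ℝ) * α) := by push_cast; ring
        rw [this, e_add]; ring
      · simp [c2]
    · simp [c1]
  have h3 : ((∑ d ∈ Finset.Ico D (2 * D), ‖s d‖ ^ 2 : ℝ) : ℂ) =
      ∑ k₁ ∈ Finset.Ioc 0 K, ∑ k₂ ∈ Finset.Ioc 0 K, ((b k₁ : ℂ) * b k₂) *
        ∑ d ∈ (Finset.Ico D (2 * D)).filter (fun d => d * k₁ ≤ N ∧ d * k₂ ≤ N),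
          e (d * (α * ((k₁ : ℝ) - k₂))) := by
    rw [Complex.ofReal_sum, Finset.sum_congr rfl h2, Finset.sum_comm]
    apply Finset.sum_congr rfl
    intro k₁ _
    rw [Finset.sum_comm]
    apply Finset.sum_congr rfl
    intro k₂ _
    rw [Finset.sum_filter, Finset.mul_sum]
    apply Finset.sum_congr rfl
    intro d _
    split_ifs <;> simp
  have hnn : 0 ≤ ∑ d ∈ Finset.Ico D (2 * D), ‖s d‖ ^ 2 :=
    Finset.sum_nonneg (fun _ _ => by positivity)
  have h4 : ∑ d ∈ Finset.Ico D (2 * D), ‖s d‖ ^ 2 =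
      ‖((∑ d ∈ Finset.Ico D (2 * D), ‖s d‖ ^ 2 : ℝ) : ℂ)‖ := by
    rw [Complex.norm_real, Real.norm_eq_abs, abs_of_nonneg hnn]
  rw [h4, h3]
  have hbK : ∀ k ∈ Finset.Ioc 0 K, |b k| ≤ W := by
    intro k hk
    rw [Finset.mem_Ioc] at hk
    exact hb k hk.1 (hk.2.trans (Nat.div_le_self _ _))
  have h5 : ∀ k₁ ∈ Finset.Ioc 0 K, ∀ k₂ ∈ Finset.Ioc 0 K,
      ‖((b k₁ : ℂ) * b k₂) *
        ∑ d ∈ (Finset.Ico D (2 * D)).filter (fun d => d * k₁ ≤ N ∧ d * k₂ ≤ N),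
          e (d * (α * ((k₁ : ℝ) - k₂)))‖ ≤ W ^ 2 * hh D (α * ((k₁ : ℝ) - k₂)) := by
    intro k₁ hk₁ k₂ hk₂
    rw [norm_mul, norm_mul, Complex.norm_real, Complex.norm_real, Real.norm_eq_abs,
      Real.norm_eq_abs, sq]
    have p1 := hbK k₁ hk₁
    have p2 := hbK k₂ hk₂
    rw [Finset.mem_Ioc] at hk₁ hk₂
    have e1 : (Finset.Ico D (2 * D)).filter (fun d => d * k₁ ≤ N ∧ d * k₂ ≤ N) =
        Finset.Ico D (min (2 * D) (min (N / k₁ + 1) (N / k₂ + 1))) := by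
      ext d
      simp only [Finset.mem_filter, Finset.mem_Ico, lt_min_iff, Nat.lt_succ_iff]
      rw [Nat.le_div_iff_mul_le hk₁.1, Nat.le_div_iff_mul_le hk₂.1]
      tauto
    rw [e1]
    apply mul_le_mul (mul_le_mul p1 p2 (abs_nonneg _) hW) _ (norm_nonneg _) (by positivity)
    apply geom_bound _ _ _ _ (by positivity)
    have : min (2 * D) (min (N / k₁ + 1) (N / k₂ + 1)) ≤ D + D := by omega
    exact_mod_cast this
  calc _ ≤ ∑ k₁ ∈ Finset.Ioc 0 K, ∑ k₂ ∈ Finset.Ioc 0 K,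
        W ^ 2 * hh D (α * ((k₁ : ℝ) - k₂)) := by
        refine (norm_sum_le _ _).trans (Finset.sum_le_sum fun k₁ hk₁ => ?_)
        exact (norm_sum_le _ _).trans (Finset.sum_le_sum fun k₂ hk₂ => h5 k₁ hk₁ k₂ hk₂)
    _ ≤ ∑ k₁ ∈ Finset.Ioc 0 K, W ^ 2 * (((K : ℝ) / q + 1) *
        (12 * (D + q * (1 + Real.log q)))) := by
        apply Finset.sum_le_sum
        intro k₁ _
        rw [← Finset.mul_sum]
        apply mul_le_mul_of_nonneg_left _ (by positivity)
        refine le_trans (le_of_eq ?_)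
          (range_bound α a q hq hc hα (1 - (k₁ : ℤ)) D (by positivity) K)
        have : Finset.Ioc 0 K = Finset.Ico 1 (K + 1) := by
          ext x; simp only [Finset.mem_Ioc, Finset.mem_Ico]; omega
        rw [this, Finset.sum_Ico_eq_sum_range]
        apply Finset.sum_congr (by simp)
        intro j _
        rw [← hh_neg]
        congr 1; push_cast; ring
    _ = _ := by
        rw [Finset.sum_const, nsmul_eq_mul]; simp; ring

lemma typeII_sum (α : ℝ) (a q : ℕ) (hq : 0 < q) (hc : Nat.gcd a q = 1)
    (hα : |α - (a : ℝ) / q| < 1 / (q : ℝ) ^ 2) (X Z l : ℝ) (N U : ℕ) (hX : 1 ≤ X)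
    (hZ : 0 < Z) (hXZ : X = Z ^ 5) (hN : (N : ℝ) ≤ X) (hU : Z ^ 2 ≤ U + 1)
    (hql : Real.log q ≤ l)
    (f b : ℕ → ℝ) (W : ℝ) (hf : ∀ d, |f d| ≤ 1) (hf0 : ∀ d, d ≤ U → f d = 0)
    (hb : ∀ k, 0 < k → k ≤ N → |b k| ≤ W) (hb0 : ∀ k, k ≤ U → b k = 0) (hW : 0 ≤ W) :
    ‖∑ d ∈ Finset.Ioc 0 N, (f d : ℂ) *
      ∑ k ∈ Finset.Ioc 0 (N / d), (b k : ℂ) * e (((d * k : ℕ) : ℝ) * α)‖ ≤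
      (Nat.log 2 N + 1) *
        (6 * W * (1 + l) * (X / Real.sqrt q + Real.sqrt (X * q) + Z ^ 4)) := by
  have hq' : (0 : ℝ) < q := by exact_mod_cast hq
  have hlog : 0 ≤ Real.log q := Real.log_natCast_nonneg q
  have hl : 0 ≤ l := hlog.trans hql
  set B := X / Real.sqrt q + Real.sqrt (X * q) + Z ^ 4 with hB
  have hB0 : 0 ≤ B := by positivity
  have hBsq : X ^ 2 / q + Z ^ 8 + X * q ≤ B ^ 2 := by
    have s1 : (X / Real.sqrt q) ^ 2 = X ^ 2 / q := by
      rw [div_pow, Real.sq_sqrt hq'.le]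
    have s2 : (Real.sqrt (X * q)) ^ 2 = X * q := Real.sq_sqrt (by positivity)
    have n1 : 0 ≤ X / Real.sqrt q := by positivity
    have n2 : 0 ≤ Real.sqrt (X * q) := by positivity
    have n3 : 0 ≤ Z ^ 4 := by positivity
    have s3 : X ^ 2 / q + Z ^ 8 + X * q =
        (X / Real.sqrt q) ^ 2 + (Z ^ 4) ^ 2 + (Real.sqrt (X * q)) ^ 2 := by
      rw [s1, s2]; ring
    rw [hB, s3]
    nlinarith [mul_nonneg n1 n2, mul_nonneg n1 n3, mul_nonneg n2 n3]
  set g : ℕ → ℂ := fun d => (f d : ℂ) *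
      ∑ k ∈ Finset.Ioc 0 (N / d), (b k : ℂ) * e (((d * k : ℕ) : ℝ) * α) with hg
  have hmaps : ∀ d ∈ Finset.Ioc 0 N, Nat.log 2 d ∈ Finset.range (Nat.log 2 N + 1) := by
    intro d hd
    rw [Finset.mem_Ioc] at hd
    rw [Finset.mem_range]
    exact Nat.lt_succ_of_le (Nat.log_mono_right hd.2)
  rw [← Finset.sum_fiberwise_of_maps_to hmaps]
  have hblock : ∀ i ∈ Finset.range (Nat.log 2 N + 1),
      ‖∑ d ∈ (Finset.Ioc 0 N).filter (fun d => Nat.log 2 d = i), g d‖ ≤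
        6 * W * (1 + l) * B := by
    intro i _
    have hsum : ∑ d ∈ (Finset.Ioc 0 N).filter (fun d => Nat.log 2 d = i), g d =
        ∑ d ∈ Finset.Ico (2 ^ i) (2 * 2 ^ i), g d := by
      apply Finset.sum_subset
      · intro d hd
        rw [Finset.mem_filter, Finset.mem_Ioc] at hd
        rw [Finset.mem_Ico]
        obtain ⟨⟨h1, h2⟩, h3⟩ := hd
        have := (Nat.log_eq_iff (b := 2) (m := i) (n := d) (Or.inr ⟨by norm_num, by omega⟩)).1 h3
        rw [pow_succ] at this
        omega
      · intro d hd hd'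
        rw [Finset.mem_Ico] at hd
        have hp : 0 < 2 ^ i := by positivity
        have hlg : Nat.log 2 d = i := by
          rw [Nat.log_eq_iff (Or.inr ⟨by norm_num, by omega⟩), pow_succ]
          omega
        have : N < d := by
          by_contra hcon
          apply hd'
          rw [Finset.mem_filter, Finset.mem_Ioc]
          exact ⟨⟨by omega, by omega⟩, hlg⟩
        simp only [hg]
        rw [Nat.div_eq_of_lt this]; simp
    rw [hsum]
    set D := 2 ^ i with hD
    have hDpos : 0 < D := by positivity
    have hR : 0 ≤ 6 * W * (1 + l) * B := by positivity
    rcases le_or_gt (2 * D) (U + 1) with h1 | h1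
    · have : ∑ d ∈ Finset.Ico D (2 * D), g d = 0 := by
        apply Finset.sum_eq_zero
        intro d hd
        rw [Finset.mem_Ico] at hd
        simp only [hg]
        rw [hf0 d (by omega)]; simp
      rw [this, norm_zero]; exact hR
    rcases lt_or_ge N (D * (U + 1)) with h2 | h2
    · have : ∑ d ∈ Finset.Ico D (2 * D), g d = 0 := by
        apply Finset.sum_eq_zero
        intro d hd
        rw [Finset.mem_Ico] at hd
        simp only [hg]
        have : ∑ k ∈ Finset.Ioc 0 (N / d), (b k : ℂ) * e (((d * k : ℕ) : ℝ) * α) = 0 := by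
          apply Finset.sum_eq_zero
          intro k hk
          rw [Finset.mem_Ioc] at hk
          have h3 : N / d < U + 1 := by
            rw [Nat.div_lt_iff_lt_mul (by omega)]
            calc N < D * (U + 1) := h2
              _ ≤ (U + 1) * d := by rw [mul_comm]; exact Nat.mul_le_mul_left _ hd.1
          rw [hb0 k (by omega)]; simp
        rw [this, mul_zero]
      rw [this, norm_zero]; exact hR
    have hmain := typeII_block α a q hq hc hα N D hDpos f b W hf hb hW
    have hD' : (0 : ℝ) < D := by exact_mod_cast hDpos
    set K : ℝ := ((N / D : ℕ) : ℝ) with hK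
    have hK0 : 0 ≤ K := by positivity
    have hKD : K * D ≤ X := by
      have : ((N / D * D : ℕ) : ℝ) ≤ N := by exact_mod_cast Nat.div_mul_le_self N D
      push_cast at this
      linarith
    have h1' : (U : ℝ) + 1 ≤ 2 * D := by exact_mod_cast h1.le
    have h2' : (D : ℝ) * (U + 1) ≤ N := by exact_mod_cast h2
    have hDZ : (D : ℝ) ≤ Z ^ 3 := by
      have : (D : ℝ) * Z ^ 2 ≤ Z ^ 3 * Z ^ 2 := by
        calc (D : ℝ) * Z ^ 2 ≤ D * (U + 1) := by gcongr
          _ ≤ X := h2'.trans hN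
          _ = Z ^ 3 * Z ^ 2 := by rw [hXZ]; ring
      exact le_of_mul_le_mul_right this (by positivity)
    have hKZ : K ≤ 2 * Z ^ 3 := by
      have : K * Z ^ 2 ≤ (2 * Z ^ 3) * Z ^ 2 := by
        calc K * Z ^ 2 ≤ K * (2 * D) := by gcongr; linarith
          _ ≤ 2 * X := by linarith
          _ = (2 * Z ^ 3) * Z ^ 2 := by rw [hXZ]; ring
      exact le_of_mul_le_mul_right this (by positivity)
    have hX0 : 0 ≤ X := by linarith
    have hfin : (D : ℝ) * (W ^ 2 * (K * ((K / q + 1) * (12 * (D + q * (1 + Real.log q)))))) ≤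
        (6 * W * (1 + l) * B) ^ 2 := by
      calc (D : ℝ) * (W ^ 2 * (K * ((K / q + 1) * (12 * (D + q * (1 + Real.log q))))))
          = 12 * W ^ 2 * (K * D) * ((K / q + 1) * (D + q * (1 + Real.log q))) := by ring
        _ ≤ 12 * W ^ 2 * X * ((K / q + 1) * (D * (1 + l) + q * (1 + l))) := by
            gcongr
            nlinarith
        _ = 12 * W ^ 2 * X * (1 + l) * ((K * D) / q + K + D + q) := by
            field_simp; ring
        _ ≤ 12 * W ^ 2 * X * (1 + l) * (X / q + 2 * Z ^ 3 + Z ^ 3 + q) := by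
            gcongr
        _ = 12 * W ^ 2 * (1 + l) * (X ^ 2 / q + 3 * (X * Z ^ 3) + X * q) := by
            field_simp; ring
        _ = 12 * W ^ 2 * (1 + l) * (X ^ 2 / q + 3 * Z ^ 8 + X * q) := by
            congr 3; rw [hXZ]; ring
        _ ≤ 12 * W ^ 2 * (1 + l) * (3 * B ^ 2) := by
            gcongr
            have : 0 ≤ X ^ 2 / q := by positivity
            have : 0 ≤ X * q := by positivity
            linarith
        _ ≤ 12 * W ^ 2 * (1 + l) ^ 2 * (3 * B ^ 2) := by
            gcongr
            nlinarith
        _ = (6 * W * (1 + l) * B) ^ 2 := by ring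
    exact le_of_sq_le_sq (hmain.trans hfin) hR
  refine (norm_sum_le _ _).trans ((Finset.sum_le_sum hblock).trans ?_)
  rw [Finset.sum_const, nsmul_eq_mul, Finset.card_range]
  push_cast
  exact le_refl _

open ArithmeticFunction in
/-- truncation of an arithmetic function to `n ≤ U` -/
noncomputable def lowPart (f : ArithmeticFunction ℝ) (U : ℕ) : ArithmeticFunction ℝ :=
  ⟨fun n => if n ≤ U then f n else 0, by simp⟩

open ArithmeticFunction in
/-- truncation of an arithmetic function to `n > U` -/
noncomputable def highPart (f : ArithmeticFunction ℝ) (U : ℕ) : ArithmeticFunction ℝ :=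
  ⟨fun n => if n ≤ U then 0 else f n, by simp⟩

lemma lowPart_apply (f : ArithmeticFunction ℝ) (U n : ℕ) :
    lowPart f U n = if n ≤ U then f n else 0 := rfl

lemma highPart_apply (f : ArithmeticFunction ℝ) (U n : ℕ) :
    highPart f U n = if n ≤ U then 0 else f n := rfl

lemma low_add_high (f : ArithmeticFunction ℝ) (U : ℕ) : lowPart f U + highPart f U = f := by
  ext n
  rw [ArithmeticFunction.add_apply, lowPart_apply, highPart_apply]
  split_ifs <;> simp

open ArithmeticFunction in
lemma vaughan_identity (U : ℕ) :
    (vonMangoldt : ArithmeticFunction ℝ) = lowPart vonMangoldt U +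
      lowPart ((moebius : ArithmeticFunction ℤ) : ArithmeticFunction ℝ) U * ArithmeticFunction.log -
      (lowPart ((moebius : ArithmeticFunction ℤ) : ArithmeticFunction ℝ) U *
        lowPart vonMangoldt U) * ((zeta : ArithmeticFunction ℕ) : ArithmeticFunction ℝ) +
      highPart ((moebius : ArithmeticFunction ℤ) : ArithmeticFunction ℝ) U *
        (highPart vonMangoldt U * ((zeta : ArithmeticFunction ℕ) : ArithmeticFunction ℝ)) := by
  have h1 := low_add_high vonMangoldt U
  have h2 := low_add_high ((moebius : ArithmeticFunction ℤ) : ArithmeticFunction ℝ) U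
  have h3 := vonMangoldt_mul_zeta
  have h4 : ((moebius : ArithmeticFunction ℤ) : ArithmeticFunction ℝ) *
    ((zeta : ArithmeticFunction ℕ) : ArithmeticFunction ℝ) = 1 := coe_moebius_mul_coe_zeta
  rw [← h3]
  set L1 := lowPart vonMangoldt U
  set L2 := highPart vonMangoldt U
  set m1 := lowPart ((moebius : ArithmeticFunction ℤ) : ArithmeticFunction ℝ) U
  set m2 := highPart ((moebius : ArithmeticFunction ℤ) : ArithmeticFunction ℝ) U
  rw [← h2] at h4
  rw [← h1]
  linear_combination (-L2) * h4

open ArithmeticFunction in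
lemma abs_moebius_real (n : ℕ) :
    |((moebius : ArithmeticFunction ℤ) : ArithmeticFunction ℝ) n| ≤ 1 := by
  rw [intCoe_apply]
  exact_mod_cast abs_moebius_le_one

lemma low_moebius_le (U n : ℕ) :
    |lowPart ((ArithmeticFunction.moebius : ArithmeticFunction ℤ) : ArithmeticFunction ℝ) U n|
      ≤ 1 := by
  rw [lowPart_apply]; split_ifs
  · exact abs_moebius_real n
  · simp

lemma high_moebius_le (U n : ℕ) :
    |highPart ((ArithmeticFunction.moebius : ArithmeticFunction ℤ) : ArithmeticFunction ℝ) U n|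
      ≤ 1 := by
  rw [highPart_apply]; split_ifs
  · simp
  · exact abs_moebius_real n

open ArithmeticFunction in
lemma conv_le_log (f g : ArithmeticFunction ℝ) (hf : ∀ n, |f n| ≤ 1)
    (hg : ∀ n, |g n| ≤ vonMangoldt n) (n : ℕ) : |(f * g) n| ≤ Real.log n := by
  rw [mul_apply, ← vonMangoldt_sum]
  calc _ ≤ ∑ x ∈ n.divisorsAntidiagonal, |f x.1 * g x.2| := Finset.abs_sum_le_sum_abs _ _
    _ ≤ ∑ x ∈ n.divisorsAntidiagonal, vonMangoldt x.2 := by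
      apply Finset.sum_le_sum
      intro x _
      rw [abs_mul]
      have := mul_le_mul (hf x.1) (hg x.2) (abs_nonneg _) zero_le_one
      linarith
    _ = ∑ x ∈ n.divisors, vonMangoldt x := by
      rw [Nat.sum_divisorsAntidiagonal' (fun _ y => vonMangoldt y)]

open ArithmeticFunction in
lemma low_vm_le (U n : ℕ) : |lowPart vonMangoldt U n| ≤ vonMangoldt n := by
  rw [lowPart_apply]; split_ifs
  · rw [abs_of_nonneg vonMangoldt_nonneg]
  · simp

open ArithmeticFunction in
lemma high_vm_le (U n : ℕ) : |highPart vonMangoldt U n| ≤ vonMangoldt n := by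
  rw [highPart_apply]; split_ifs
  · simp
  · rw [abs_of_nonneg vonMangoldt_nonneg]

open ArithmeticFunction in
lemma low_low_zero (f g : ArithmeticFunction ℝ) (U n : ℕ) (hn : U * U < n) :
    (lowPart f U * lowPart g U) n = 0 := by
  rw [mul_apply]
  apply Finset.sum_eq_zero
  intro x hx
  rw [Nat.mem_divisorsAntidiagonal] at hx
  rw [lowPart_apply, lowPart_apply]
  split_ifs with h1 h2
  · have := Nat.mul_le_mul h1 h2
    omega
  all_goals simp

open ArithmeticFunction in
lemma high_conv_zero (f g : ArithmeticFunction ℝ) (U n : ℕ) (hn : n ≤ U) :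
    (highPart f U * g) n = 0 := by
  rw [mul_apply]
  apply Finset.sum_eq_zero
  intro x hx
  rw [Nat.mem_divisorsAntidiagonal] at hx
  rw [highPart_apply, if_pos, zero_mul]
  have : x.1 ∣ n := ⟨x.2, hx.1.symm⟩
  exact (Nat.le_of_dvd (by omega) this).trans hn

open ArithmeticFunction in
lemma vm_sum_bound (α : ℝ) (a q : ℕ) (hq : 0 < q) (hc : Nat.gcd a q = 1)
    (hα : |α - (a : ℝ) / q| < 1 / (q : ℝ) ^ 2) (X Z : ℝ) (N : ℕ) (hX : 2 ≤ X)
    (hZ : 0 < Z) (hXZ : X = Z ^ 5) (hN : (N : ℝ) ≤ X) (hqX : (q : ℝ) ≤ X) :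
    ‖∑ n ∈ Finset.Ioc 0 N, ((vonMangoldt n : ℝ) : ℂ) * e (n * α)‖ ≤
      181 * (X / Real.sqrt q + Real.sqrt (X * q) + Z ^ 4) * (1 + Real.log X) ^ 3 := by
  have hX0 : 0 < X := by linarith
  have hq' : (0 : ℝ) < q := by exact_mod_cast hq
  have hq1 : (1 : ℝ) ≤ q := by exact_mod_cast hq
  set l := Real.log X with hl
  have hl0 : 0 ≤ l := Real.log_nonneg (by linarith)
  set B := X / Real.sqrt q + Real.sqrt (X * q) + Z ^ 4 with hB
  have hlogle : ∀ n : ℕ, (n : ℝ) ≤ X → Real.log n ≤ l := by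
    intro n hn
    rcases Nat.eq_zero_or_pos n with h | h
    · rw [h]; simpa using hl0
    · exact Real.log_le_log (by exact_mod_cast h) hn
  have hZ1 : 1 ≤ Z := by
    by_contra hcon
    push Not at hcon
    have := pow_le_one₀ (n := 5) hZ.le hcon.le
    linarith
  have hql := hlogle q hqX
  set U := ⌊Z ^ 2⌋₊ with hU
  have hU1 : (U : ℝ) ≤ Z ^ 2 := Nat.floor_le (by positivity)
  have hU2 : Z ^ 2 ≤ U + 1 := (Nat.lt_floor_add_one _).le
  have hUU : ((U * U : ℕ) : ℝ) ≤ Z ^ 4 := by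
    push_cast
    calc (U : ℝ) * U ≤ Z ^ 2 * Z ^ 2 := by gcongr
      _ = Z ^ 4 := by ring
  have hZ4X : Z ^ 4 ≤ X := by
    rw [hXZ]; exact pow_le_pow_right₀ hZ1 (by norm_num)
  have hUle : (U : ℝ) ≤ Z ^ 4 := hU1.trans (pow_le_pow_right₀ hZ1 (by norm_num))
  have n1 : 0 ≤ X / Real.sqrt q := by positivity
  have n2 : 0 ≤ Real.sqrt (X * q) := by positivity
  have n3 : 0 ≤ Z ^ 4 := by positivity
  have hB0 : 0 ≤ B := by positivity
  have hbase : X / q + Z ^ 4 + q ≤ B := by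
    have s1 : Real.sqrt q ≤ q := by
      rw [Real.sqrt_le_left hq'.le]; nlinarith
    have s2 : X / q ≤ X / Real.sqrt q := by gcongr
    have s3 : (q : ℝ) ≤ Real.sqrt (X * q) := by
      apply Real.le_sqrt_of_sq_le; nlinarith
    rw [hB]; linarith
  set m1 := lowPart ((moebius : ArithmeticFunction ℤ) : ArithmeticFunction ℝ) U with hm1
  set m2 := highPart ((moebius : ArithmeticFunction ℤ) : ArithmeticFunction ℝ) U with hm2
  set L1 := lowPart vonMangoldt U with hL1
  set L2 := highPart vonMangoldt U with hL2
  set ζ' := ((zeta : ArithmeticFunction ℕ) : ArithmeticFunction ℝ) with hζ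
  have hid : (vonMangoldt : ArithmeticFunction ℝ) = L1 + m1 * ArithmeticFunction.log -
      (m1 * L1) * ζ' + m2 * (L2 * ζ') := vaughan_identity U
  have hsplit : ∑ n ∈ Finset.Ioc 0 N, ((vonMangoldt n : ℝ) : ℂ) * e (n * α) =
      ∑ n ∈ Finset.Ioc 0 N, (L1 n : ℂ) * e (n * α) +
      ∑ n ∈ Finset.Ioc 0 N, ((m1 * ArithmeticFunction.log) n : ℂ) * e (n * α) -
      ∑ n ∈ Finset.Ioc 0 N, (((m1 * L1) * ζ') n : ℂ) * e (n * α) +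
      ∑ n ∈ Finset.Ioc 0 N, ((m2 * (L2 * ζ')) n : ℂ) * e (n * α) := by
    rw [← Finset.sum_add_distrib, ← Finset.sum_sub_distrib, ← Finset.sum_add_distrib]
    apply Finset.sum_congr rfl
    intro n _
    have : vonMangoldt n = L1 n + (m1 * ArithmeticFunction.log) n -
      ((m1 * L1) * ζ') n + (m2 * (L2 * ζ')) n := by
      conv_lhs => rw [hid]
      rw [ArithmeticFunction.add_apply, sub_eq_add_neg, ArithmeticFunction.add_apply,
        ArithmeticFunction.add_apply, sub_eq_add_neg]
      rfl
    rw [this]; push_cast; ring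
  -- trivial part
  have b0 : ‖∑ n ∈ Finset.Ioc 0 N, (L1 n : ℂ) * e (n * α)‖ ≤ Z ^ 4 * l := by
    refine (norm_sum_le _ _).trans ?_
    calc _ ≤ ∑ n ∈ Finset.Ioc 0 N, if n ≤ U then l else 0 := by
          apply Finset.sum_le_sum
          intro n hn
          rw [Finset.mem_Ioc] at hn
          rw [norm_mul, norm_e, mul_one, Complex.norm_real, Real.norm_eq_abs, hL1, lowPart_apply]
          split_ifs
          · rw [abs_of_nonneg vonMangoldt_nonneg]
            refine vonMangoldt_le_log.trans (hlogle n ?_)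
            exact le_trans (by exact_mod_cast hn.2) hN
          · simp
      _ = ∑ n ∈ (Finset.Ioc 0 N).filter (fun n => n ≤ U), l := by rw [Finset.sum_filter]
      _ ≤ ∑ n ∈ Finset.Ioc 0 U, l := by
          apply Finset.sum_le_sum_of_subset_of_nonneg
          · intro n hn
            simp only [Finset.mem_filter, Finset.mem_Ioc] at hn ⊢
            omega
          · intros; exact hl0
      _ = U * l := by simp
      _ ≤ Z ^ 4 * l := by gcongr
  -- first type I sum
  have b1 : ‖∑ n ∈ Finset.Ioc 0 N, ((m1 * ArithmeticFunction.log) n : ℂ) * e (n * α)‖ ≤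
      1 * l * (84 * (X / q + U + q) * (1 + l)) := by
    rw [sum_conv m1 ArithmeticFunction.log N (fun n => e (n * α))]
    apply typeI_sum α a q hq hc hα X hX0.le U N l hql (hlogle U (hUle.trans hZ4X)) hN m1
      ArithmeticFunction.log 1 l zero_le_one
    · intro d _ _; exact low_moebius_le U d
    · intro d hd; rw [hm1, lowPart_apply, if_neg (by omega)]
    · intro x y hxy
      show Real.log x ≤ Real.log y
      rcases Nat.eq_zero_or_pos x with h | h
      · rw [h]; simpa using Real.log_natCast_nonneg y
      · exact Real.log_le_log (by exact_mod_cast h) (by exact_mod_cast hxy)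
    · simp
    · exact hlogle N hN
  -- second type I sum
  have b2 : ‖∑ n ∈ Finset.Ioc 0 N, (((m1 * L1) * ζ') n : ℂ) * e (n * α)‖ ≤
      l * 1 * (84 * (X / q + (U * U : ℕ) + q) * (1 + l)) := by
    rw [sum_conv (m1 * L1) ζ' N (fun n => e (n * α))]
    apply typeI_sum α a q hq hc hα X hX0.le (U * U) N l hql (hlogle _ (hUU.trans hZ4X)) hN
      (fun n => (m1 * L1) n) ζ' l 1 hl0
    · intro d _ hd
      refine (conv_le_log m1 L1 (low_moebius_le U) (low_vm_le U) d).trans (hlogle d ?_)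
      exact le_trans (by exact_mod_cast hd) (hUU.trans hZ4X)
    · intro d hd; exact low_low_zero _ _ U d hd
    · intro x y hxy
      rw [hζ, natCoe_apply, natCoe_apply, zeta_apply, zeta_apply]
      split_ifs
      · simp
      · simp
      · omega
      · simp
    · simp
    · rw [hζ, natCoe_apply, zeta_apply]; split_ifs <;> simp
  -- type II sum
  have b3 : ‖∑ n ∈ Finset.Ioc 0 N, ((m2 * (L2 * ζ')) n : ℂ) * e (n * α)‖ ≤
      (Nat.log 2 N + 1) * (6 * l * (1 + l) * B) := by
    rw [sum_conv m2 (L2 * ζ') N (fun n => e (n * α))]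
    apply typeII_sum α a q hq hc hα X Z l N U (by linarith) hZ hXZ hN hU2 hql m2
      (fun n => (L2 * ζ') n) l
    · exact high_moebius_le U
    · intro d hd; rw [hm2, highPart_apply, if_pos hd]
    · intro k _ hk
      show |(L2 * ζ') k| ≤ l
      rw [mul_comm L2]
      refine (conv_le_log ζ' L2 ?_ (high_vm_le U) k).trans (hlogle k ?_)
      · intro n
        rw [hζ, natCoe_apply, zeta_apply]; split_ifs <;> simp
      · exact le_trans (by exact_mod_cast hk) hN
    · intro k hk; exact high_conv_zero _ _ U k hk
    · exact hl0
  have hlog2 : (Nat.log 2 N : ℝ) ≤ 2 * l := by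
    rcases Nat.eq_zero_or_pos N with h | h
    · rw [h]; simpa using hl0
    have h1 : (2 : ℝ) ^ (Nat.log 2 N) ≤ X := by
      have := Nat.pow_log_le_self 2 (x := N) (by omega)
      exact le_trans (by exact_mod_cast this) hN
    have h2 := Real.log_le_log (by positivity) h1
    rw [Real.log_pow] at h2
    have h3 := Real.log_two_gt_d9
    have h4 : (0 : ℝ) ≤ Nat.log 2 N := by positivity
    nlinarith
  set L := 1 + l with hL
  have hL1' : 1 ≤ L := by linarith
  have hlL : l ≤ L := by linarith
  have hL13 : L ≤ L ^ 3 := by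
    calc L = L ^ 1 := (pow_one L).symm
      _ ≤ L ^ 3 := pow_le_pow_right₀ hL1' (by norm_num)
  have hL23 : L ^ 2 ≤ L ^ 3 := pow_le_pow_right₀ hL1' (by norm_num)
  have hZB : Z ^ 4 ≤ B := by rw [hB]; linarith
  have f0 : Z ^ 4 * l ≤ B * L ^ 3 := by
    calc Z ^ 4 * l ≤ B * L := by gcongr
      _ ≤ B * L ^ 3 := by gcongr
  have f1 : 1 * l * (84 * (X / q + U + q) * L) ≤ 84 * (B * L ^ 3) := by
    calc 1 * l * (84 * (X / q + U + q) * L) ≤ 1 * L * (84 * B * L) := by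
          gcongr; linarith
      _ = 84 * (B * L ^ 2) := by ring
      _ ≤ _ := by gcongr
  have f2 : l * 1 * (84 * (X / q + (U * U : ℕ) + q) * L) ≤ 84 * (B * L ^ 3) := by
    calc l * 1 * (84 * (X / q + (U * U : ℕ) + q) * L) ≤ L * 1 * (84 * B * L) := by
          gcongr; linarith
      _ = 84 * (B * L ^ 2) := by ring
      _ ≤ _ := by gcongr
  have f3 : (Nat.log 2 N + 1) * (6 * l * L * B) ≤ 12 * (B * L ^ 3) := by
    calc (Nat.log 2 N + 1) * (6 * l * L * B) ≤ (2 * L) * (6 * L * L * B) := by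
          gcongr; linarith
      _ = _ := by ring
  rw [hsplit]
  refine (norm_add_le _ _).trans ?_
  have g1 := norm_sub_le (∑ n ∈ Finset.Ioc 0 N, (L1 n : ℂ) * e (n * α) +
      ∑ n ∈ Finset.Ioc 0 N, ((m1 * ArithmeticFunction.log) n : ℂ) * e (n * α))
      (∑ n ∈ Finset.Ioc 0 N, (((m1 * L1) * ζ') n : ℂ) * e (n * α))
  have g2 := norm_add_le (∑ n ∈ Finset.Ioc 0 N, (L1 n : ℂ) * e (n * α))
      (∑ n ∈ Finset.Ioc 0 N, ((m1 * ArithmeticFunction.log) n : ℂ) * e (n * α))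
  linarith

/-- exponential sum over all primes up to `N` -/
noncomputable def primeSum (N : ℕ) (α : ℝ) : ℂ :=
  ∑ p ∈ (Finset.Ioc 0 N).filter Nat.Prime, (Real.log p : ℂ) * e ((p : ℝ) * α)

open ArithmeticFunction in
lemma primeSum_sub (N : ℕ) (α : ℝ) :
    ‖∑ n ∈ Finset.Ioc 0 N, ((vonMangoldt n : ℝ) : ℂ) * e (n * α) - primeSum N α‖ ≤
      2 * Real.sqrt N * Real.log N := by
  rcases Nat.eq_zero_or_pos N with h | h
  · subst h; simp [primeSum]
  have h1 := Chebyshev.psi_sub_theta_le (x := N) (by exact_mod_cast h)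
  refine le_trans ?_ h1
  rw [primeSum, Finset.sum_filter, ← Finset.sum_sub_distrib, Chebyshev.psi, Chebyshev.theta,
    Finset.sum_filter, Nat.floor_natCast, ← Finset.sum_sub_distrib]
  refine (norm_sum_le _ _).trans (Finset.sum_le_sum ?_)
  intro n _
  split_ifs with hp
  · rw [vonMangoldt_apply_prime hp]; simp
  · simp only [sub_zero]
    rw [norm_mul, norm_e, mul_one, Complex.norm_real, Real.norm_eq_abs,
      abs_of_nonneg vonMangoldt_nonneg]

lemma S1_eq (δ X α : ℝ) (hδ0 : 0 < δ) (hδ1 : δ < 1) (hX : 2 ≤ X) :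
    S1 δ X α = primeSum ⌊X⌋₊ α - primeSum (⌈δ * X⌉₊ - 1) α := by
  have hδX : 0 < δ * X := by positivity
  have hc : 0 < ⌈δ * X⌉₊ := Nat.ceil_pos.2 hδX
  have hle : ⌈δ * X⌉₊ - 1 ≤ ⌊X⌋₊ := by
    apply Nat.le_floor
    have : ((⌈δ * X⌉₊ - 1 : ℕ) : ℝ) < δ * X := by
      apply Nat.lt_ceil.1; omega
    nlinarith
  rw [eq_sub_iff_add_eq, S1, primeSum, primeSum, ← Finset.sum_union]
  · apply Finset.sum_congr _ (fun _ _ => rfl)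
    ext p
    have e1 : δ * X ≤ (p : ℝ) ↔ ⌈δ * X⌉₊ ≤ p := Nat.ceil_le.symm
    have e2 : (p : ℝ) ≤ X ↔ p ≤ ⌊X⌋₊ := (Nat.le_floor_iff (by linarith)).symm
    simp only [Finset.mem_union, Finset.mem_filter, Finset.mem_Icc, Finset.mem_Ioc, e1, e2]
    constructor
    · rintro (⟨h1, h2, h3⟩ | ⟨h1, h2⟩)
      · exact ⟨by omega, h2⟩
      · exact ⟨by omega, h2⟩
    · rintro ⟨h1, h2⟩
      by_cases h : ⌈δ * X⌉₊ ≤ p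
      · left; exact ⟨by omega, h2, h, by omega⟩
      · right; exact ⟨by omega, h2⟩
  · rw [Finset.disjoint_left]
    intro p h1 h2
    have e1 : δ * X ≤ (p : ℝ) ↔ ⌈δ * X⌉₊ ≤ p := Nat.ceil_le.symm
    simp only [Finset.mem_filter, Finset.mem_Icc, Finset.mem_Ioc, e1] at h1 h2
    omega

theorem vaughan_bound (δ : ℝ) (hδ0 : 0 < δ) (hδ1 : δ < 1) :
    ∃ C > 0, ∀ X ≥ (2 : ℝ), ∀ α : ℝ, ∀ a q : ℕ, 0 < a → 0 < q → Nat.gcd a q = 1 →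
      |α - (a : ℝ) / q| < 1 / (q : ℝ) ^ 2 →
      ‖S1 δ X α‖ ≤ C * (X / Real.sqrt q + Real.sqrt (X * q) + X ^ ((4 : ℝ) / 5))
        * Real.log X ^ 4 := by
  refine ⟨366 * 81, by norm_num, ?_⟩
  intro X hX α a q _ hq hc hα
  have hX0 : 0 < X := by linarith
  set Z := X ^ ((1 : ℝ) / 5) with hZ
  have hZ0 : 0 < Z := by positivity
  have hXZ : X = Z ^ 5 := by
    rw [hZ, ← Real.rpow_natCast, ← Real.rpow_mul hX0.le]; norm_num
  have hZ4 : X ^ ((4 : ℝ) / 5) = Z ^ 4 := by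
    rw [hZ, ← Real.rpow_natCast, ← Real.rpow_mul hX0.le]; norm_num
  have hZ1 : 1 ≤ Z := Real.one_le_rpow (by linarith) (by norm_num)
  rw [hZ4]
  have n1 : 0 ≤ X / Real.sqrt q := by positivity
  have n2 : 0 ≤ Real.sqrt (X * q) := by positivity
  have n3 : 0 ≤ Z ^ 4 := by positivity
  set B := X / Real.sqrt q + Real.sqrt (X * q) + Z ^ 4 with hB
  have hB0 : 0 ≤ B := by positivity
  set l := Real.log X with hl
  have hl0 : 1 / 2 ≤ l := by
    have h1 := Real.log_le_log (by norm_num) hX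
    have h2 := Real.log_two_gt_d9
    linarith
  have hL4 : (1 + l) ^ 4 ≤ 81 * l ^ 4 := by
    calc (1 + l) ^ 4 ≤ (3 * l) ^ 4 := by gcongr; linarith
      _ = 81 * l ^ 4 := by ring
  suffices h : ‖S1 δ X α‖ ≤ 366 * B * (1 + l) ^ 4 by
    calc _ ≤ _ := h
      _ ≤ 366 * B * (81 * l ^ 4) := by gcongr
      _ = _ := by ring
  have hLpow : (1 + l) ^ 3 ≤ (1 + l) ^ 4 := pow_le_pow_right₀ (by linarith) (by norm_num)
  have hLpow1 : 1 + l ≤ (1 + l) ^ 3 := by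
    calc 1 + l = (1 + l) ^ 1 := (pow_one _).symm
      _ ≤ _ := pow_le_pow_right₀ (by linarith) (by norm_num)
  have hlogle : ∀ n : ℕ, (n : ℝ) ≤ X → Real.log n ≤ l := by
    intro n hn
    rcases Nat.eq_zero_or_pos n with h | h
    · rw [h]; simp; linarith
    · exact Real.log_le_log (by exact_mod_cast h) hn
  rcases le_or_gt (q : ℝ) X with hqX | hqX
  · have hP : ∀ N : ℕ, (N : ℝ) ≤ X → ‖primeSum N α‖ ≤ 183 * B * (1 + l) ^ 3 := by
      intro N hN
      have h1 := vm_sum_bound α a q hq hc hα X Z N hX hZ0 hXZ hN hqX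
      have h2 := primeSum_sub N α
      have h3 : 2 * Real.sqrt N * Real.log N ≤ 2 * B * (1 + l) ^ 3 := by
        have s1 : Real.sqrt N ≤ Z ^ 4 := by
          apply Real.sqrt_le_iff.2 ⟨n3, ?_⟩
          calc (N : ℝ) ≤ Z ^ 5 := by rw [← hXZ]; exact hN
            _ ≤ Z ^ 8 := pow_le_pow_right₀ hZ1 (by norm_num)
            _ = (Z ^ 4) ^ 2 := by ring
        have s2 : Z ^ 4 ≤ B := by rw [hB]; linarith
        have s3 := hlogle N hN
        have s4 := Real.log_natCast_nonneg N
        gcongr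
        · linarith
        · linarith
      have h4 := norm_sub_norm_le (primeSum N α)
        (∑ n ∈ Finset.Ioc 0 N, ((ArithmeticFunction.vonMangoldt n : ℝ) : ℂ) * e (n * α))
      rw [norm_sub_rev] at h4
      linarith
    rw [S1_eq δ X α hδ0 hδ1 hX]
    have p1 := hP ⌊X⌋₊ (Nat.floor_le hX0.le)
    have p2 := hP (⌈δ * X⌉₊ - 1) (by
      have hc : 0 < ⌈δ * X⌉₊ := Nat.ceil_pos.2 (by positivity)
      have : ((⌈δ * X⌉₊ - 1 : ℕ) : ℝ) < δ * X := by
        apply Nat.lt_ceil.1; omega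
      nlinarith)
    have p3 := norm_sub_le (primeSum ⌊X⌋₊ α) (primeSum (⌈δ * X⌉₊ - 1) α)
    have p4 : 366 * B * (1 + l) ^ 3 ≤ 366 * B * (1 + l) ^ 4 := by gcongr
    linarith
  · have h1 : ‖S1 δ X α‖ ≤ X * l := by
      rw [S1]
      refine (norm_sum_le _ _).trans ?_
      calc _ ≤ ∑ p ∈ (Finset.Icc 1 (Nat.floor X)).filter
            (fun p : ℕ => p.Prime ∧ δ * X ≤ (p : ℝ) ∧ (p : ℝ) ≤ X), l := by
            apply Finset.sum_le_sum
            intro p hp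
            rw [Finset.mem_filter] at hp
            rw [norm_mul, norm_e, mul_one, Complex.norm_real, Real.norm_eq_abs,
              abs_of_nonneg (Real.log_natCast_nonneg p)]
            exact hlogle p hp.2.2.2
        _ ≤ ∑ p ∈ Finset.Icc 1 (Nat.floor X), l := by
            apply Finset.sum_le_sum_of_subset_of_nonneg (Finset.filter_subset _ _)
            intros; linarith
        _ = ⌊X⌋₊ * l := by simp
        _ ≤ X * l := by
            gcongr
            exact Nat.floor_le hX0.le
    have h2 : X ≤ B := by
      have : X ≤ Real.sqrt (X * q) := by
        apply Real.le_sqrt_of_sq_le; nlinarith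
      rw [hB]; linarith
    calc _ ≤ _ := h1
      _ ≤ B * (1 + l) ^ 4 := by
        gcongr
        linarith
      _ ≤ 366 * B * (1 + l) ^ 4 := by
        gcongr; linarith
end

section
/- Let λ ≠ 0 be real, k > 1, 0 < η < 1, R > 1/η, 0 < P < X. With S_k(α) = Σ_{δX ≤ p^k ≤ X}(log p)e(p^k α) over primes and K_η(α) = (sin(πηα)/(πα))², one has ∫_{P/X}^{R} |S_k(λα)|² K_η(α) dα ≪ η X^{1/k} (log X)³. -/
open Real MeasureTheory

/-- `S_k(α) = Σ_{δX ≤ p^k ≤ X} (log p) e(p^k α)`, sum over primes `p`. -/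
noncomputable def Sk (δ X k : ℝ) (α : ℝ) : ℂ :=
  ∑ p ∈ (Finset.Icc 1 (Nat.floor X)).filter
      (fun p : ℕ => p.Prime ∧ δ * X ≤ (p : ℝ) ^ k ∧ (p : ℝ) ^ k ≤ X),
    (Real.log p : ℂ) * e ((p : ℝ) ^ k * α)

/-- `K_η(α) = (sin(πηα)/(πα))²` -/
noncomputable def Keta (η α : ℝ) : ℝ := (Real.sin (Real.pi * η * α) / (Real.pi * α)) ^ 2

open FourierTransform in
lemma cauchy_ft (v : ℝ) :
    ∫ ξ : ℝ, e (ξ * v) * (((1 + ξ ^ 2)⁻¹ : ℝ) : ℂ) = π * Real.exp (-(2 * π * |v|)) := by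
  set f : ℝ → ℂ := fun x => ((Real.exp (-(2 * π * |x|)) : ℝ) : ℂ) with hf
  have hcont : Continuous f := by fun_prop
  have hpi := Real.pi_pos
  have key : ∀ w : ℝ, IntegrableOn (fun x : ℝ => Complex.exp (↑(-2 * π * x * w) * Complex.I) • f x) (Set.Iic 0) ∧
     IntegrableOn (fun x : ℝ => Complex.exp (↑(-2 * π * x * w) * Complex.I) • f x) (Set.Ioi 0) ∧
     (∫ x : ℝ in Set.Iic 0, Complex.exp (↑(-2 * π * x * w) * Complex.I) • f x) = 1 / (2 * π - 2 * π * w * Complex.I) ∧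
     (∫ x : ℝ in Set.Ioi 0, Complex.exp (↑(-2 * π * x * w) * Complex.I) • f x) = 1 / (2 * π + 2 * π * w * Complex.I) := by
    intro w
    have e1 : Set.EqOn (fun x : ℝ => Complex.exp (↑(-2 * π * x * w) * Complex.I) • f x) (fun x : ℝ => Complex.exp ((2 * π - 2 * π * w * Complex.I) * x)) (Set.Iic 0) := by
      intro x hx
      simp only [hf, abs_of_nonpos (Set.mem_Iic.1 hx), smul_eq_mul]
      push_cast
      rw [← Complex.exp_add]
      congr 1; ring
    have e2 : Set.EqOn (fun x : ℝ => Complex.exp (↑(-2 * π * x * w) * Complex.I) • f x) (fun x : ℝ => Complex.exp ((-(2 * π + 2 * π * w * Complex.I)) * x)) (Set.Ioi 0) := by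
      intro x hx
      simp only [hf, abs_of_pos (Set.mem_Ioi.1 hx), smul_eq_mul]
      push_cast
      rw [← Complex.exp_add]
      congr 1; ring
    have r1 : 0 < (2 * π - 2 * π * w * Complex.I : ℂ).re := by simp; exact hpi
    have r2 : (-(2 * π + 2 * π * w * Complex.I) : ℂ).re < 0 := by simp; exact hpi
    refine ⟨?_, ?_, ?_, ?_⟩
    · exact (integrableOn_congr_fun e1 measurableSet_Iic).2 (integrableOn_exp_mul_complex_Iic r1 0)
    · exact (integrableOn_congr_fun e2 measurableSet_Ioi).2 (integrableOn_exp_mul_complex_Ioi r2 0)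
    · rw [setIntegral_congr_fun measurableSet_Iic e1, integral_exp_mul_complex_Iic r1]
      simp
    · rw [setIntegral_congr_fun measurableSet_Ioi e2, integral_exp_mul_complex_Ioi r2]
      simp [neg_div]
      rw [← neg_add, inv_neg, neg_neg, add_comm]
  have hint : Integrable f := by
    have h0 := key 0
    simp only [mul_zero, Complex.ofReal_zero, zero_mul, Complex.exp_zero, one_smul] at h0
    have := h0.1.union h0.2.1
    rwa [Set.Iic_union_Ioi, integrableOn_univ] at this
  have hft : 𝓕 f = fun w : ℝ => (((π)⁻¹ * (1 + w ^ 2)⁻¹ : ℝ) : ℂ) := by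
    ext w
    obtain ⟨i1, i2, j1, j2⟩ := key w
    rw [Real.fourier_real_eq_integral_exp_smul, ← intervalIntegral.integral_Iic_add_Ioi i1 i2, j1, j2]
    have hpc : (π : ℂ) ≠ 0 := by exact_mod_cast hpi.ne'
    have a1 : (2 * π - 2 * π * w * Complex.I : ℂ) ≠ 0 := by
      intro h; have := congrArg Complex.re h; simp at this; 
    have a2 : (2 * π + 2 * π * w * Complex.I : ℂ) ≠ 0 := by
      intro h; have := congrArg Complex.re h; simp at this; 
    have a3 : (1 + w ^ 2 : ℂ) ≠ 0 := by
      have : (1 + w ^ 2 : ℝ) ≠ 0 := by positivity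
      exact_mod_cast this
    push_cast
    rw [div_add_div _ _ a1 a2, ← mul_inv, ← one_div, div_eq_div_iff (mul_ne_zero a1 a2) (mul_ne_zero hpc a3)]
    linear_combination (4 * π^2 * w ^ 2 : ℂ) * Complex.I_sq
  have hftint : Integrable (𝓕 f) := by
    rw [hft]
    exact (integrable_inv_one_add_sq.const_mul _).ofReal
  have inv := congrFun (hcont.fourierInv_fourier_eq hint hftint) v
  rw [Real.fourierInv_eq', hft] at inv
  have : (π : ℂ) * f v = π * Real.exp (-(2 * π * |v|)) := by simp [hf]
  rw [← this, ← inv, ← integral_const_mul]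
  congr 1
  ext ξ
  have hpc : (π : ℂ) ≠ 0 := by exact_mod_cast hpi.ne'
  simp only [e, smul_eq_mul]
  push_cast
  have : Complex.exp (2 * π * Complex.I * (ξ * v)) = Complex.exp (2 * π * (inner ℝ ξ v : ℝ) * Complex.I) := by
    congr 1; simp; ring
  rw [this]
  field_simp

lemma e_cont (b : ℝ) : Continuous (fun α : ℝ => e (b * α)) := by
  unfold e; fun_prop

lemma e_conj (x y : ℝ) : e x * (starRingEnd ℂ) (e y) = e (x - y) := by
  unfold e
  rw [← Complex.exp_conj, ← Complex.exp_add]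
  congr 1
  have h2 : (starRingEnd ℂ) (2 : ℂ) = 2 := Complex.conj_ofNat 2
  simp [h2]; ring

lemma inv_int (η : ℝ) (hη : 0 < η) : Integrable (fun α : ℝ => (1 + (η * α) ^ 2)⁻¹) :=
  integrable_inv_one_add_sq.comp_mul_left' hη.ne'

lemma cauchy_ft_scaled (η : ℝ) (hη : 0 < η) (b : ℝ) :
    ∫ α : ℝ, e (b * α) * (((1 + (η * α) ^ 2)⁻¹ : ℝ) : ℂ)
      = ((π / η * Real.exp (-(2 * π * |b / η|)) : ℝ) : ℂ) := by
  have h := Measure.integral_comp_mul_left (fun ξ : ℝ => e (ξ * (b / η)) * (((1 + ξ ^ 2)⁻¹ : ℝ) : ℂ)) η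
  rw [cauchy_ft] at h
  have h2 : ∀ α : ℝ, e (b * α) = e (η * α * (b / η)) := fun α => by congr 1; field_simp
  simp_rw [h2]
  rw [h, abs_of_pos (inv_pos.2 hη), Complex.real_smul]
  push_cast
  ring

lemma e_int_s11 (η : ℝ) (hη : 0 < η) (b : ℝ) :
    Integrable (fun α : ℝ => e (b * α) * (((1 + (η * α) ^ 2)⁻¹ : ℝ) : ℂ)) := by
  refine (inv_int η hη).ofReal.bdd_mul (c := 1) (e_cont b).aestronglyMeasurable ?_
  filter_upwards with α
  rw [norm_e]

lemma quad (η : ℝ) (hη : 0 < η) (s : Finset ℕ) (a x : ℕ → ℝ) :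
    Integrable (fun α : ℝ => ‖∑ p ∈ s, (a p : ℂ) * e (x p * α)‖ ^ 2 * (1 + (η * α) ^ 2)⁻¹) ∧
    ∫ α : ℝ, ‖∑ p ∈ s, (a p : ℂ) * e (x p * α)‖ ^ 2 * (1 + (η * α) ^ 2)⁻¹
      = π / η * ∑ p ∈ s, ∑ q ∈ s, a p * a q * Real.exp (-(2 * π * |(x p - x q) / η|)) := by
  have hpt : ∀ α : ℝ, ((‖∑ p ∈ s, (a p : ℂ) * e (x p * α)‖ ^ 2 * (1 + (η * α) ^ 2)⁻¹ : ℝ) : ℂ)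
      = ∑ p ∈ s, ∑ q ∈ s, (a p * a q : ℂ) * (e ((x p - x q) * α) * (((1 + (η * α) ^ 2)⁻¹ : ℝ) : ℂ)) := by
    intro α
    rw [Complex.ofReal_mul, Complex.ofReal_pow, ← Complex.mul_conj', map_sum, Finset.sum_mul_sum,
      Finset.sum_mul]
    refine Finset.sum_congr rfl fun p _ => ?_
    rw [Finset.sum_mul]
    refine Finset.sum_congr rfl fun q _ => ?_
    rw [sub_mul, ← e_conj, map_mul, Complex.conj_ofReal]
    ring
  have hint : Integrable (fun α : ℝ => ((‖∑ p ∈ s, (a p : ℂ) * e (x p * α)‖ ^ 2 * (1 + (η * α) ^ 2)⁻¹ : ℝ) : ℂ)) := by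
    simp_rw [hpt]
    exact integrable_finsetSum _ fun p _ => integrable_finsetSum _ fun q _ => (e_int_s11 η hη _).const_mul _
  refine ⟨by simpa only [RCLike.re_eq_complex_re, Complex.ofReal_re] using hint.re, ?_⟩
  have : ((∫ α : ℝ, ‖∑ p ∈ s, (a p : ℂ) * e (x p * α)‖ ^ 2 * (1 + (η * α) ^ 2)⁻¹ : ℝ) : ℂ)
      = ((π / η * ∑ p ∈ s, ∑ q ∈ s, a p * a q * Real.exp (-(2 * π * |(x p - x q) / η|)) : ℝ) : ℂ) := by
    rw [← integral_complex_ofReal]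
    simp_rw [hpt]
    rw [integral_finsetSum _ fun p _ => integrable_finsetSum _ fun q _ => (e_int_s11 η hη _).const_mul _]
    rw [Complex.ofReal_mul, Complex.ofReal_sum, Finset.mul_sum]
    refine Finset.sum_congr rfl fun p _ => ?_
    rw [integral_finsetSum _ fun q _ => (e_int_s11 η hη _).const_mul _, Complex.ofReal_sum, Finset.mul_sum]
    refine Finset.sum_congr rfl fun q _ => ?_
    rw [integral_const_mul, cauchy_ft_scaled η hη]
    push_cast
    ring
  exact_mod_cast this

lemma Keta_le (η : ℝ) (hη : 0 < η) (α : ℝ) (hα : 0 < α) :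
    Keta η α ≤ 2 * η ^ 2 * (1 + (η * α) ^ 2)⁻¹ := by
  unfold Keta
  have hpi := Real.pi_pos
  have hs1 : Real.sin (π * η * α) ^ 2 ≤ (π * η * α) ^ 2 := by
    rw [sq_le_sq, abs_of_pos (by positivity : 0 < π * η * α)]
    exact Real.abs_sin_le_abs.trans (le_of_eq (abs_of_pos (by positivity)))
  have hs2 : Real.sin (π * η * α) ^ 2 ≤ π ^ 2 :=
    (Real.sin_sq_le_one _).trans (by nlinarith [Real.pi_gt_three])
  rw [div_pow, ← div_eq_mul_inv, div_le_div_iff₀ (by positivity) (by positivity)]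
  nlinarith [mul_le_mul_of_nonneg_right hs2 (sq_nonneg (η * α))]

lemma pow_gap (k : ℝ) (hk : 1 < k) (p q : ℕ) (hp : 1 ≤ p) (hq : 1 ≤ q) :
    |(p : ℝ) - q| ≤ |(p : ℝ) ^ k - (q : ℝ) ^ k| := by
  have main : ∀ x y : ℝ, 1 ≤ y → y ≤ x → x - y ≤ x ^ k - y ^ k := by
    intro x y hy hxy
    have hx : 1 ≤ x := hy.trans hxy
    have e1 : x ^ k = x * x ^ (k - 1) := by
      rw [← Real.rpow_one_add' (by linarith) (by linarith)]; congr 1; ring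
    have e2 : y ^ k = y * y ^ (k - 1) := by
      rw [← Real.rpow_one_add' (by linarith) (by linarith)]; congr 1; ring
    have h1 : y ^ (k-1) ≤ x ^ (k-1) := Real.rpow_le_rpow (by linarith) hxy (by linarith)
    have h2 : 1 ≤ y ^ (k-1) := Real.one_le_rpow hy (by linarith)
    rw [e1, e2]
    nlinarith
  have hp' : (1:ℝ) ≤ p := by exact_mod_cast hp
  have hq' : (1:ℝ) ≤ q := by exact_mod_cast hq
  rcases le_total (q:ℝ) p with h | h
  · rw [abs_of_nonneg (by linarith)]
    exact (main _ _ hq' h).trans (le_abs_self _)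
  · rw [abs_sub_comm, abs_of_nonneg (by linarith), abs_sub_comm]
    exact (main _ _ hp' h).trans (le_abs_self _)

lemma exp_summable (c : ℝ) (hc : 0 < c) : Summable (fun m : ℤ => Real.exp (-(c * |(m : ℝ)|))) := by
  have h : Summable (fun n : ℕ => Real.exp (-(c * n))) := by
    have := Real.summable_exp_nat_mul_iff.2 (neg_lt_zero.2 hc)
    refine this.congr fun n => by ring_nf
  refine Summable.of_nat_of_neg ?_ ?_ <;> simpa using h

lemma sum_exp_le (c : ℝ) (hc : 0 < c) (s : Finset ℕ) (p : ℕ) :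
    ∑ q ∈ s, Real.exp (-(c * |(p : ℝ) - q|)) ≤ ∑' m : ℤ, Real.exp (-(c * |(m : ℝ)|)) := by
  have hinj : Set.InjOn (fun q : ℕ => (p : ℤ) - q) s := by
    intro a _ b _ h; simpa using h
  have := Finset.sum_image (f := fun m : ℤ => Real.exp (-(c * |(m : ℝ)|))) hinj
  push_cast at this
  rw [← this]
  exact (exp_summable c hc).sum_le_tsum _ fun _ _ => (Real.exp_pos _).le

theorem Sk_sq_Keta_bound (δ : ℝ) (hδ0 : 0 < δ) (hδ1 : δ < 1) (l : ℝ) (hl : l ≠ 0)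
    (k : ℝ) (hk : 1 < k) :
    ∃ C > 0, ∀ X ≥ (2 : ℝ), ∀ η : ℝ, 0 < η → η < 1 → ∀ R > 1 / η, ∀ P : ℝ, 0 < P → P < X →
      ∫ α in (P / X)..R, ‖Sk δ X k (l * α)‖ ^ 2 * Keta η α
        ≤ C * η * X ^ (1 / k) * Real.log X ^ 3 := by
  have hpi := Real.pi_pos
  have hl2 : 0 < Real.log 2 := Real.log_pos (by norm_num)
  have hc : 0 < 2 * π * |l| := by positivity
  set T := ∑' m : ℤ, Real.exp (-(2 * π * |l| * |(m : ℝ)|)) with hT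
  have hTpos : 0 < T := (exp_summable _ hc).tsum_pos (fun _ => (Real.exp_pos _).le) 0 (Real.exp_pos _)
  refine ⟨2 * π * T / Real.log 2, by positivity, ?_⟩
  intro X hX η hη hη1 R hR P hP hPX
  have hX0 : 0 < X := by linarith
  have hPX1 : P / X < 1 := (div_lt_one hX0).2 hPX
  have hR1 : 1 < R := lt_trans (by rw [lt_div_iff₀ hη]; linarith) hR
  have hPX0 : 0 < P / X := by positivity
  set s := (Finset.Icc 1 (Nat.floor X)).filter
      (fun p : ℕ => p.Prime ∧ δ * X ≤ (p : ℝ) ^ k ∧ (p : ℝ) ^ k ≤ X) with hs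
  have hSk : ∀ α : ℝ, Sk δ X k (l * α) = ∑ p ∈ s, (Real.log p : ℂ) * e (((p : ℝ) ^ k * l) * α) := by
    intro α
    simp only [Sk, ← hs, mul_assoc]
  obtain ⟨hI, hE⟩ := quad η hη s (fun p => Real.log p) (fun p => (p : ℝ) ^ k * l)
  set G : ℝ → ℝ := fun α => ‖∑ p ∈ s, (Real.log p : ℂ) * e (((p : ℝ) ^ k * l) * α)‖ ^ 2 * (1 + (η * α) ^ 2)⁻¹ with hG
  have step1 : ∫ α in (P / X)..R, ‖Sk δ X k (l * α)‖ ^ 2 * Keta η α ≤ ∫ α : ℝ, 2 * η ^ 2 * G α := by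
    rw [intervalIntegral.integral_of_le (by linarith)]
    refine le_trans ?_ (setIntegral_le_integral (s := Set.Ioc (P / X) R) (hI.const_mul _) ?_)
    · refine integral_mono_of_nonneg ?_ (hI.const_mul _).integrableOn ?_
      · filter_upwards with α
        exact mul_nonneg (sq_nonneg _) (sq_nonneg _)
      · filter_upwards [ae_restrict_mem measurableSet_Ioc] with α hα
        rw [hSk]
        refine (mul_le_mul_of_nonneg_left (Keta_le η hη α (hPX0.trans hα.1)) (sq_nonneg _)).trans ?_
        simp only [hG]
        exact le_of_eq (by ring)
    · filter_upwards with α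
      simp only [hG]
      positivity
  have hlogX : 0 < Real.log X := Real.log_pos (by linarith)
  have hmem : ∀ p ∈ s, 1 ≤ p ∧ (p : ℝ) ≤ X ^ (1 / k) := by
    intro p hp
    simp only [hs, Finset.mem_filter, Finset.mem_Icc] at hp
    refine ⟨hp.1.1, ?_⟩
    have := Real.rpow_le_rpow (by positivity) hp.2.2.2 (by positivity : 0 ≤ 1 / k)
    rwa [← Real.rpow_mul (by positivity), mul_one_div_cancel (by linarith), Real.rpow_one] at this
  have hlog : ∀ p ∈ s, 0 ≤ Real.log p ∧ Real.log p ≤ Real.log X := by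
    intro p hp
    have h := hmem p hp
    have h1 : (1 : ℝ) ≤ p := by exact_mod_cast h.1
    refine ⟨Real.log_nonneg h1, Real.log_le_log (by linarith) (h.2.trans ?_)⟩
    calc X ^ (1 / k) ≤ X ^ (1 : ℝ) := Real.rpow_le_rpow_of_exponent_le (by linarith)
          (by rw [div_le_one (by linarith)]; exact hk.le)
      _ = X := Real.rpow_one X
  have hcard : (s.card : ℝ) ≤ X ^ (1 / k) := by
    have hsub : s ⊆ Finset.Icc 1 (Nat.floor (X ^ (1 / k))) := by
      intro p hp
      have h := hmem p hp
      exact Finset.mem_Icc.2 ⟨h.1, Nat.le_floor h.2⟩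
    have := Finset.card_le_card hsub
    rw [Nat.card_Icc, Nat.add_sub_cancel] at this
    exact (Nat.cast_le.2 this).trans (Nat.floor_le (by positivity))
  have hsum : ∑ p ∈ s, ∑ q ∈ s, Real.log p * Real.log q *
      Real.exp (-(2 * π * |((p : ℝ) ^ k * l - (q : ℝ) ^ k * l) / η|)) ≤ X ^ (1 / k) * (Real.log X ^ 2 * T) := by
    calc _ ≤ ∑ p ∈ s, Real.log X ^ 2 * T := by
          refine Finset.sum_le_sum fun p hp => ?_
          calc _ ≤ ∑ q ∈ s, Real.log X ^ 2 * Real.exp (-(2 * π * |l| * |(p : ℝ) - q|)) := by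
                refine Finset.sum_le_sum fun q hq => ?_
                have hg := pow_gap k hk p q (hmem p hp).1 (hmem q hq).1
                have hg2 : |l| * |(p : ℝ) - q| ≤ |((p : ℝ) ^ k * l - (q : ℝ) ^ k * l) / η| := by
                  rw [← sub_mul, abs_div, abs_mul, abs_of_pos hη, le_div_iff₀ hη]
                  have h0 : 0 ≤ |l| * |(p : ℝ) - q| := by positivity
                  nlinarith [mul_le_mul_of_nonneg_left hg (abs_nonneg l)]
                have a1 := hlog p hp
                have a2 := hlog q hq
                rw [sq]
                refine mul_le_mul (mul_le_mul a1.2 a2.2 a2.1 hlogX.le) (Real.exp_le_exp.2 ?_) (Real.exp_pos _).le (by positivity)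
                rw [mul_assoc (2 * π)]
                exact neg_le_neg (mul_le_mul_of_nonneg_left hg2 (by positivity))
            _ ≤ Real.log X ^ 2 * T := by
                rw [← Finset.mul_sum]
                exact mul_le_mul_of_nonneg_left (sum_exp_le _ hc s p) (by positivity)
      _ = s.card * (Real.log X ^ 2 * T) := by rw [Finset.sum_const, nsmul_eq_mul]
      _ ≤ _ := mul_le_mul_of_nonneg_right hcard (by positivity)
  refine step1.trans ?_
  rw [integral_const_mul, hE]
  have hlog2 : Real.log 2 ≤ Real.log X := Real.log_le_log (by norm_num) hX
  calc _ ≤ 2 * η ^ 2 * (π / η * (X ^ (1 / k) * (Real.log X ^ 2 * T))) := by gcongr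
    _ = (2 * π * T * η * X ^ (1 / k) * Real.log X ^ 2) * 1 := by field_simp
    _ ≤ (2 * π * T * η * X ^ (1 / k) * Real.log X ^ 2) * (Real.log X / Real.log 2) := by
        gcongr
        rwa [one_le_div hl2]
    _ = _ := by ring
end
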